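/- arXiv:1104.3543 — 2 statements merged into one kernel-verified Lean document; each statement's English description precedes it below -/
import Mathlib

section
/- Let α < ω₁. Then there is a block subspace X ⊆ W such that one of the following holds: (1) for every block sequence (y_n) in X and every K ≥ 1, player I has a strategy in F^{ωα}_X to play outcomes (x_0,…,x_k) satisfying (x_0,…,x_k) ≁_K (y_0,…,y_k); or (2) there is K ≥ 1 such that for every block sequence (z_n) in X, player II has a strategy in G^α_X to play outcomes (x_0,…,x_k) satisfying (x_0,…,x_k) ∼_K (z_0,…,z_k). -/
open Filter Topology

namespace Rosendal

variable {𝒲 : Type} [NormedAddCommGroup 𝒲] [NormedSpace ℝ 𝒲]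

/-- `(e n)` is a Schauder basis of the Banach space `𝒲`. -/
def IsSchauderBasis (e : ℕ → 𝒲) : Prop :=
  ∀ x : 𝒲, ∃! a : ℕ → ℝ,
    Tendsto (fun N => ∑ i ∈ Finset.range N, a i • e i) atTop (𝓝 x)

/-- `x` is a linear combination of the vectors `b i`, `i ∈ s`. -/
def SuppIn (b : ℕ → 𝒲) (x : 𝒲) (s : Finset ℕ) : Prop :=
  ∃ a : ℕ → ℝ, x = ∑ i ∈ s, a i • b i

/-- `(x i)_{i<k} ∼_K (y i)_{i<k}`. -/
def SeqEquiv (K : ℝ) (k : ℕ) (x y : ℕ → 𝒲) : Prop :=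
  ∀ a : ℕ → ℝ,
    (1 / K) * ‖∑ i ∈ Finset.range k, a i • x i‖ ≤ ‖∑ i ∈ Finset.range k, a i • y i‖ ∧
    ‖∑ i ∈ Finset.range k, a i • y i‖ ≤ K * ‖∑ i ∈ Finset.range k, a i • x i‖

/-- The outcome `l = (x 0, …, x k)` satisfies `(x 0, …, x k) ∼_K (y 0, …, y k)`. -/
def OutcomeEquiv (K : ℝ) (l : List 𝒲) (y : ℕ → 𝒲) : Prop :=
  SeqEquiv K l.length (fun i => l.getD i 0) y

/-- The outcome `l = (u 0, v 0, u 1, v 1, …, u k, v k)` satisfies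
`(u 0, …, u k) ∼_K (v 0, …, v k)`. -/
def PairOutcomeEquiv (K : ℝ) (l : List 𝒲) : Prop :=
  SeqEquiv K (l.length / 2) (fun i => l.getD (2 * i) 0) (fun i => l.getD (2 * i + 1) 0)

/-- The tree `T((x n), Y, K)`. -/
def embTree (x : ℕ → 𝒲) (Y : Set 𝒲) (K : ℝ) : Set (List 𝒲) :=
  {l | (∀ v ∈ l, v ∈ Y) ∧ SeqEquiv K l.length (fun i => l.getD i 0) x}

open Classical in
/-- The rank of a tree of finite sequences; `⊤ = ∞` if it is ill-founded. -/
noncomputable def treeRank (T : Set (List 𝒲)) : WithTop Ordinal :=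
  if h : WellFounded (fun t s : T => s.val <+: t.val ∧ s.val ≠ t.val) then
    ((⨆ s : T, Order.succ ((h.apply s).rank) : Ordinal) : WithTop Ordinal)
  else ⊤

open Classical in
/-- The embeddability index `Emb((x n), Y) = sup_{K ≥ 1} rank T((x n), Y, K)`. -/
noncomputable def embIndex (x : ℕ → 𝒲) (Y : Set 𝒲) : WithTop Ordinal :=
  if ∃ K : ℝ, 1 ≤ K ∧ treeRank (embTree x Y K) = ⊤ then ⊤
  else ((sSup {o : Ordinal | ∃ K : ℝ, 1 ≤ K ∧
      (o : WithTop Ordinal) = treeRank (embTree x Y K)} : Ordinal) : WithTop Ordinal)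

/-- `(I m)` is a sequence of successive nonempty finite intervals `I 0 < I 1 < …` of `ℕ`. -/
def IntervalSeq (I : ℕ → Finset ℕ) : Prop :=
  (∀ m, ∃ a b : ℕ, a ≤ b ∧ I m = Finset.Icc a b) ∧
  ∀ m, ∀ i ∈ I m, ∀ j ∈ I (m + 1), i < j

/-- The setting of Section 2 of the paper: a Banach space `𝒲` with a Schauder basis
`(e n)`, a countable subfield `𝔽 ⊆ ℝ` closed under the norms of finite `𝔽`-linear
combinations of the basis, and the countable `𝔽`-vector space `W` spanned by `(e n)`. -/
structure Frame (𝒲 : Type) [NormedAddCommGroup 𝒲] [NormedSpace ℝ 𝒲] : Type where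
  e : ℕ → 𝒲
  complete : CompleteSpace 𝒲
  basis : IsSchauderBasis e
  𝔽 : Subfield ℝ
  countable : (𝔽 : Set ℝ).Countable
  norm_mem : ∀ (s : Finset ℕ) (a : ℕ → ℝ), (∀ i ∈ s, a i ∈ 𝔽) →
    ‖∑ i ∈ s, a i • e i‖ ∈ 𝔽

namespace Frame

variable {𝒲 : Type} [NormedAddCommGroup 𝒲] [NormedSpace ℝ 𝒲] (ctx : Frame 𝒲)

/-- The `𝔽`-linear span of a set of vectors. -/
def fspan (S : Set 𝒲) : Set 𝒲 :=
  {v | ∃ t : Finset 𝒲, ↑t ⊆ S ∧ ∃ c : 𝒲 → ℝ, (∀ w, c w ∈ ctx.𝔽) ∧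
    v = ∑ w ∈ t, c w • w}

/-- The countable `𝔽`-vector space `W` with basis `(e n)`. -/
def W : Set 𝒲 := ctx.fspan (Set.range ctx.e)

/-- `(y n)` is a block sequence with respect to the reference block basis `(b n)`:
a sequence of nonzero vectors of the `𝔽`-span of `(b n)` with successive supports. -/
def BlockSeqRel (b y : ℕ → 𝒲) : Prop :=
  (∀ n, y n ∈ ctx.fspan (Set.range b)) ∧ (∀ n, y n ≠ 0) ∧
  ∃ D : ℕ → Finset ℕ, (∀ n, SuppIn b (y n) (D n)) ∧
    ∀ n, ∀ i ∈ D n, ∀ j ∈ D (n + 1), i < j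

/-- `(y n)` is a block sequence (with respect to the basis `(e n)` of `W`). -/
def IsBlockSeq (y : ℕ → 𝒲) : Prop := ctx.BlockSeqRel ctx.e y

/-- `Y` is a block subspace of `X`: the `𝔽`-span of an infinite block sequence of
vectors of `X`. -/
def IsBlockSubspaceOf (Y X : Set 𝒲) : Prop :=
  ∃ y : ℕ → 𝒲, ctx.IsBlockSeq y ∧ (∀ n, y n ∈ X) ∧ Y = ctx.fspan (Set.range y)

/-- `Y` is a block subspace of `W`. -/
def IsBlockSubspace (Y : Set 𝒲) : Prop := ctx.IsBlockSubspaceOf Y ctx.W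

/-- `F` is a finite-dimensional `𝔽`-subspace of `X`. -/
def IsFinDimIn (F X : Set 𝒲) : Prop :=
  ∃ t : Finset 𝒲, ↑t ⊆ X ∧ F = ctx.fspan ↑t

/-- `n < F`: every vector of `F` is supported on basis vectors of index `> n`. -/
def NatLt (n : ℕ) (F : Set 𝒲) : Prop :=
  ∀ x ∈ F, ∃ s : Finset ℕ, SuppIn ctx.e x s ∧ ∀ i ∈ s, n < i

/-- `V` is an `𝔽`-subspace of `𝒲`. -/
def IsSubspace (V : Set 𝒲) : Prop :=
  (0 : 𝒲) ∈ V ∧ (∀ u v : 𝒲, u ∈ V → v ∈ V → u + v ∈ V) ∧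
    ∀ c : ℝ, c ∈ ctx.𝔽 → ∀ v ∈ V, c • v ∈ V

/-- `V` is infinite-dimensional (not contained in a finitely generated subspace). -/
def IsInfDim (V : Set 𝒲) : Prop :=
  ¬∃ t : Finset 𝒲, V ⊆ ctx.fspan ↑t

/-- Game values of the asymptotic game `F^β_X`, for player II, computed by transfinite
recursion on the ordinal bound.  `IIWinsF X S β Facc vec` states: in the asymptotic game
below `X`, from a position where the vectors `vec` have been played and the
finite-dimensional subspaces played by II span `Facc`, and where I must now play a natural
number together with an ordinal `< β`, player II has a strategy so that the final outcome
lies in `S`. -/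
noncomputable def IIWinsF (X : Set 𝒲) (S : Set (List 𝒲)) :
    Ordinal → Set 𝒲 → List 𝒲 → Prop :=
  WellFounded.fix (C := fun _ : Ordinal => Set 𝒲 → List 𝒲 → Prop) Ordinal.lt_wf
    (fun β ih Facc vec =>
      ∀ n : ℕ, ∀ ξ : Ordinal, ∀ hξ : ξ < β,
        ∃ F : Set 𝒲, ctx.IsFinDimIn F X ∧ ctx.NatLt n F ∧
          ∃ x : 𝒲, x ≠ 0 ∧ x ∈ ctx.fspan (Facc ∪ F) ∧
            (ξ = 0 → vec ++ [x] ∈ S) ∧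
            (ξ ≠ 0 → ih ξ hξ (ctx.fspan (Facc ∪ F)) (vec ++ [x])))

/-- Player II has a strategy in the asymptotic game `F^β_X` to play an outcome in `S`. -/
noncomputable def IIStratF (X : Set 𝒲) (β : Ordinal) (S : Set (List 𝒲)) : Prop :=
  (β = 0 → ([] : List 𝒲) ∈ S) ∧ (β ≠ 0 → ctx.IIWinsF X S β (ctx.fspan ∅) [])

/-- Game values of the asymptotic game `F^β_X` for player I (who plays the integers and
the ordinals, trying to steer the outcome into `S`). -/
noncomputable def IWinsF (X : Set 𝒲) (S : Set (List 𝒲)) :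
    Ordinal → Set 𝒲 → List 𝒲 → Prop :=
  WellFounded.fix (C := fun _ : Ordinal => Set 𝒲 → List 𝒲 → Prop) Ordinal.lt_wf
    (fun β ih Facc vec =>
      ∃ n : ℕ, ∃ ξ : Ordinal, ∃ hξ : ξ < β,
        ∀ F : Set 𝒲, ctx.IsFinDimIn F X → ctx.NatLt n F →
        ∀ x : 𝒲, x ≠ 0 → x ∈ ctx.fspan (Facc ∪ F) →
          (ξ = 0 → vec ++ [x] ∈ S) ∧
          (ξ ≠ 0 → ih ξ hξ (ctx.fspan (Facc ∪ F)) (vec ++ [x])))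

/-- Player I has a strategy in the asymptotic game `F^β_X` to play an outcome in `S`. -/
noncomputable def IStratF (X : Set 𝒲) (β : Ordinal) (S : Set (List 𝒲)) : Prop :=
  (β = 0 → ([] : List 𝒲) ∈ S) ∧ (β ≠ 0 → ctx.IWinsF X S β (ctx.fspan ∅) [])

/-- Game values of the Gowers game `G^α_X` for player II. -/
noncomputable def IIWinsG (X : Set 𝒲) (S : Set (List 𝒲)) :
    Ordinal → Set 𝒲 → List 𝒲 → Prop :=
  WellFounded.fix (C := fun _ : Ordinal => Set 𝒲 → List 𝒲 → Prop) Ordinal.lt_wf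
    (fun α ih Facc vec =>
      ∀ Y : Set 𝒲, ctx.IsBlockSubspaceOf Y X →
      ∀ ξ : Ordinal, ∀ hξ : ξ < α,
        ∃ F : Set 𝒲, ctx.IsFinDimIn F Y ∧
          ∃ x : 𝒲, x ≠ 0 ∧ x ∈ ctx.fspan (Facc ∪ F) ∧
            (ξ = 0 → vec ++ [x] ∈ S) ∧
            (ξ ≠ 0 → ih ξ hξ (ctx.fspan (Facc ∪ F)) (vec ++ [x])))

/-- Player II has a strategy in the generalised Gowers game `G^α_X` to play in `S`. -/
noncomputable def IIStratG (X : Set 𝒲) (α : Ordinal) (S : Set (List 𝒲)) : Prop :=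
  (α = 0 → ([] : List 𝒲) ∈ S) ∧ (α ≠ 0 → ctx.IIWinsG X S α (ctx.fspan ∅) [])

/-- Game values of the adversarial game `A^α_X` for player II (who plays the integers,
the finite-dimensional subspaces `F_l ⊆ Y_l` and the vectors `y_l`). -/
noncomputable def IIWinsA (X : Set 𝒲) (S : Set (List 𝒲)) :
    Ordinal → Set 𝒲 → Set 𝒲 → List 𝒲 → Prop :=
  WellFounded.fix (C := fun _ : Ordinal => Set 𝒲 → Set 𝒲 → List 𝒲 → Prop)
    Ordinal.lt_wf
    (fun α ih Eacc Facc vec =>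
      ∃ n : ℕ,
        ∀ E : Set 𝒲, ctx.IsFinDimIn E X → ctx.NatLt n E →
        ∀ x : 𝒲, x ≠ 0 → x ∈ ctx.fspan (Eacc ∪ E) →
        ∀ Y : Set 𝒲, ctx.IsBlockSubspaceOf Y X →
        ∀ ξ : Ordinal, ∀ hξ : ξ < α,
          ∃ F : Set 𝒲, ctx.IsFinDimIn F Y ∧
            ∃ y : 𝒲, y ≠ 0 ∧ y ∈ ctx.fspan (Facc ∪ F) ∧
              (ξ = 0 → vec ++ [x, y] ∈ S) ∧
              (ξ ≠ 0 → ih ξ hξ (ctx.fspan (Eacc ∪ E)) (ctx.fspan (Facc ∪ F))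
                (vec ++ [x, y])))

/-- Player II has a strategy in the adversarial game `A^α_X` to play in `S`. -/
noncomputable def IIStratA (X : Set 𝒲) (α : Ordinal) (S : Set (List 𝒲)) : Prop :=
  (α = 0 → ([] : List 𝒲) ∈ S) ∧
  (α ≠ 0 → ctx.IIWinsA X S α (ctx.fspan ∅) (ctx.fspan ∅) [])

/-- Game values of the adversarial game `B^α_X` for player I (who plays the
finite-dimensional subspaces `E_l ⊆ Y_l`, the vectors `x_l`, the integers and the
ordinals). -/
noncomputable def IWinsB (X : Set 𝒲) (S : Set (List 𝒲)) :
    Ordinal → Set 𝒲 → Set 𝒲 → List 𝒲 → Prop :=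
  WellFounded.fix (C := fun _ : Ordinal => Set 𝒲 → Set 𝒲 → List 𝒲 → Prop)
    Ordinal.lt_wf
    (fun α ih Eacc Facc vec =>
      ∀ Y : Set 𝒲, ctx.IsBlockSubspaceOf Y X →
        ∃ E : Set 𝒲, ctx.IsFinDimIn E Y ∧
          ∃ x : 𝒲, x ≠ 0 ∧ x ∈ ctx.fspan (Eacc ∪ E) ∧
            ∃ n : ℕ, ∃ ξ : Ordinal, ∃ hξ : ξ < α,
              ∀ F : Set 𝒲, ctx.IsFinDimIn F X → ctx.NatLt n F →
              ∀ y : 𝒲, y ≠ 0 → y ∈ ctx.fspan (Facc ∪ F) →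
                (ξ = 0 → vec ++ [x, y] ∈ S) ∧
                (ξ ≠ 0 → ih ξ hξ (ctx.fspan (Eacc ∪ E)) (ctx.fspan (Facc ∪ F))
                  (vec ++ [x, y])))

/-- Player I has a strategy in the adversarial game `B^α_X` to play in `S`. -/
noncomputable def IStratB (X : Set 𝒲) (α : Ordinal) (S : Set (List 𝒲)) : Prop :=
  (α = 0 → ([] : List 𝒲) ∈ S) ∧
  (α ≠ 0 → ctx.IWinsB X S α (ctx.fspan ∅) (ctx.fspan ∅) [])

/-- Game values of the adversarial game `B^α_X` for player II (who plays the block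
subspaces `Y_l`, the finite-dimensional subspaces `F_l` and the vectors `y_l`). -/
noncomputable def IIWinsB (X : Set 𝒲) (S : Set (List 𝒲)) :
    Ordinal → Set 𝒲 → Set 𝒲 → List 𝒲 → Prop :=
  WellFounded.fix (C := fun _ : Ordinal => Set 𝒲 → Set 𝒲 → List 𝒲 → Prop)
    Ordinal.lt_wf
    (fun α ih Eacc Facc vec =>
      ∃ Y : Set 𝒲, ctx.IsBlockSubspaceOf Y X ∧
        ∀ E : Set 𝒲, ctx.IsFinDimIn E Y →
        ∀ x : 𝒲, x ≠ 0 → x ∈ ctx.fspan (Eacc ∪ E) →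
        ∀ n : ℕ, ∀ ξ : Ordinal, ∀ hξ : ξ < α,
          ∃ F : Set 𝒲, ctx.IsFinDimIn F X ∧ ctx.NatLt n F ∧
            ∃ y : 𝒲, y ≠ 0 ∧ y ∈ ctx.fspan (Facc ∪ F) ∧
              (ξ = 0 → vec ++ [x, y] ∈ S) ∧
              (ξ ≠ 0 → ih ξ hξ (ctx.fspan (Eacc ∪ E)) (ctx.fspan (Facc ∪ F))
                (vec ++ [x, y])))

/-- Player II has a strategy in the adversarial game `B^α_X` to play in `S`. -/
noncomputable def IIStratB (X : Set 𝒲) (α : Ordinal) (S : Set (List 𝒲)) : Prop :=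
  (α = 0 → ([] : List 𝒲) ∈ S) ∧
  (α ≠ 0 → ctx.IIWinsB X S α (ctx.fspan ∅) (ctx.fspan ∅) [])

end Frame

end Rosendal


namespace Rosendal
namespace Frame
variable {𝒲 : Type} [NormedAddCommGroup 𝒲] [NormedSpace ℝ 𝒲] (ctx : Frame 𝒲)

theorem exists_proj : ∃ C : ℝ, 1 ≤ C ∧ ∃ S : ℕ → 𝒲 →ₗ[ℝ] 𝒲,
    (∀ N x, ‖S N x‖ ≤ C * ‖x‖) ∧ ∀ N i, S N (ctx.e i) = if i < N then ctx.e i else 0 := by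
  have := ctx.complete
  have hb := ctx.basis
  choose a ha huniq using hb
  have hadd : ∀ x y, a (x + y) = a x + a y := by
    intro x y
    symm
    apply huniq
    have := (ha x).add (ha y)
    refine this.congr fun N => ?_
    simp [add_smul, Finset.sum_add_distrib]
  have hsmul : ∀ (c : ℝ) x, a (c • x) = c • a x := by
    intro c x
    symm
    apply huniq
    have := (ha x).const_smul c
    refine this.congr fun N => ?_
    simp [Finset.smul_sum, smul_smul]
  have hbd : ∀ x, ∃ C : ℝ, ∀ N, ‖∑ i ∈ Finset.range N, a x i • ctx.e i‖ ≤ C := by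
    intro x
    obtain ⟨C, hC⟩ := (Metric.isBounded_range_of_tendsto _ (ha x)).exists_norm_le
    exact ⟨C, fun N => hC _ ⟨N, rfl⟩⟩
  choose Cb hCb using hbd
  let T : 𝒲 →ₗ[ℝ] (BoundedContinuousFunction ℕ 𝒲) :=
    { toFun := fun x => BoundedContinuousFunction.ofNormedAddCommGroupDiscrete
        (fun N => ∑ i ∈ Finset.range N, a x i • ctx.e i) (Cb x) (hCb x)
      map_add' := by
        intro x y
        ext N
        simp [hadd, add_smul, Finset.sum_add_distrib]
      map_smul' := by
        intro c x
        ext N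
        simp [hsmul, Finset.smul_sum, smul_smul] }
  have hT : ∀ x N, T x N = ∑ i ∈ Finset.range N, a x i • ctx.e i := fun x N => rfl
  have hcont : Continuous T := by
    apply LinearMap.continuous_of_seq_closed_graph
    intro u x g hu hg
    have hgN : ∀ N, Tendsto (fun k => T (u k) N) atTop (𝓝 (g N)) := by
      intro N
      exact ((BoundedContinuousFunction.evalCLM ℝ N (β := 𝒲)).continuous.tendsto g).comp hg
    have hd : ∀ N, ∃ c : ℝ, c • ctx.e N = g (N + 1) - g N := by
      intro N
      have h1 := (hgN (N+1)).sub (hgN N)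
      have hcl : IsClosed ((Submodule.span ℝ {ctx.e N} : Submodule ℝ 𝒲) : Set 𝒲) :=
        Submodule.closed_of_finiteDimensional _
      have : g (N+1) - g N ∈ (Submodule.span ℝ {ctx.e N} : Submodule ℝ 𝒲) := by
        refine hcl.mem_of_tendsto h1 (Eventually.of_forall fun k => ?_)
        rw [hT, hT, Finset.sum_range_succ]
        simp only [add_sub_cancel_left]
        exact Submodule.smul_mem _ _ (Submodule.mem_span_singleton_self _)
      exact Submodule.mem_span_singleton.1 this
    choose c hc using hd
    have hg0 : g 0 = 0 := by
      refine tendsto_nhds_unique (hgN 0) ?_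
      simp [hT]
    have hgs : ∀ N, g N = ∑ i ∈ Finset.range N, c i • ctx.e i := by
      intro N
      induction N with
      | zero => simp [hg0]
      | succ N ih => rw [Finset.sum_range_succ, ← ih, hc]; abel
    have hlim : Tendsto (fun N => g N) atTop (𝓝 x) := by
      rw [Metric.tendsto_atTop]
      intro ε hε
      rw [Metric.tendsto_atTop] at hu hg
      obtain ⟨k1, h1⟩ := hu (ε/3) (by positivity)
      obtain ⟨k2, h2⟩ := hg (ε/3) (by positivity)
      let k := max k1 k2
      have h1 := h1 k (le_max_left _ _)
      have h2 := h2 k (le_max_right _ _)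
      have h3 : Tendsto (fun N => ∑ i ∈ Finset.range N, a (u k) i • ctx.e i) atTop (𝓝 (u k)) :=
        ha (u k)
      rw [Metric.tendsto_atTop] at h3
      obtain ⟨N0, h3⟩ := h3 (ε/3) (by positivity)
      refine ⟨N0, fun N hN => ?_⟩
      have h3 := h3 N hN
      have h4 : dist (T (u k) N) (g N) < ε/3 :=
        lt_of_le_of_lt (BoundedContinuousFunction.dist_coe_le_dist N) h2
      rw [hT] at h4
      have t1 := dist_triangle (g N) (∑ i ∈ Finset.range N, a (u k) i • ctx.e i) x
      have t2 := dist_triangle (∑ i ∈ Finset.range N, a (u k) i • ctx.e i) (u k) x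
      rw [dist_comm] at h4
      linarith
    have hca : c = a x := by
      apply huniq
      refine hlim.congr hgs
    ext N
    rw [hgs, hT, hca]
  let Tc : 𝒲 →L[ℝ] (BoundedContinuousFunction ℕ 𝒲) := ⟨T, hcont⟩
  have hae : ∀ i, a (ctx.e i) = fun j => if j = i then 1 else 0 := by
    intro i
    symm
    apply huniq
    refine tendsto_const_nhds.congr' ?_
    filter_upwards [eventually_gt_atTop i] with N hN
    simp [hN]
  refine ⟨max 1 ‖Tc‖, le_max_left _ _, fun N =>
    { toFun := fun x => ∑ i ∈ Finset.range N, a x i • ctx.e i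
      map_add' := by
        intro x y
        simp [hadd, add_smul, Finset.sum_add_distrib]
      map_smul' := by
        intro c x
        simp [hsmul, Finset.smul_sum, smul_smul] }, ?_, ?_⟩
  · intro N x
    have h1 : ‖T x N‖ ≤ ‖T x‖ := BoundedContinuousFunction.norm_coe_le_norm _ _
    have h2 : ‖T x‖ ≤ ‖Tc‖ * ‖x‖ := Tc.le_opNorm x
    have h3 : ‖Tc‖ * ‖x‖ ≤ max 1 ‖Tc‖ * ‖x‖ := by gcongr; exact le_max_right _ _
    exact (h1.trans h2).trans h3
  · intro N i
    simp [hae]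

theorem e_ne (i : ℕ) : ctx.e i ≠ 0 := by
  intro h
  obtain ⟨a, ha, hu⟩ := ctx.basis 0
  have h1 : (fun _ => (0:ℝ)) = a := by
    apply hu; simp
  have h2 : (fun j => if j = i then (1:ℝ) else 0) = a := by
    apply hu
    simp [h]
  have := congrFun (h1.trans h2.symm) i
  simp at this

theorem e_indep : LinearIndependent ℝ ctx.e := by
  obtain ⟨C, -, S, -, hS⟩ := ctx.exists_proj
  rw [linearIndependent_iff']
  intro s g hg i hi
  have h1 := congrArg (S (i+1)) hg
  have h2 := congrArg (S i) hg
  simp only [map_sum, map_smul, hS, map_zero] at h1 h2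
  have h3 : ∑ j ∈ s, (g j • (if j < i + 1 then ctx.e j else 0) - g j • (if j < i then ctx.e j else 0))
      = 0 := by rw [Finset.sum_sub_distrib, h1, h2, sub_zero]
  have h4 : ∀ j, (g j • (if j < i + 1 then ctx.e j else 0) - g j • (if j < i then ctx.e j else 0))
      = if j = i then g i • ctx.e i else 0 := by
    intro j
    rcases lt_trichotomy j i with h | h | h
    · simp [h, h.ne, Nat.lt_succ_of_lt h]
    · subst h; simp
    · have : ¬ j < i + 1 := by omega
      simp [this, h.ne', not_lt_of_gt h]
  rw [Finset.sum_congr rfl (fun j _ => h4 j)] at h3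
  simp [hi, ctx.e_ne] at h3
  exact h3

/-- real span of the basis vectors with index in `s` -/
def U (s : Set ℕ) : Submodule ℝ 𝒲 := Submodule.span ℝ (ctx.e '' s)

theorem suppIn_iff (x : 𝒲) (s : Finset ℕ) : SuppIn ctx.e x s ↔ x ∈ ctx.U ↑s := by
  unfold U SuppIn
  rw [Submodule.mem_span_image_finset_iff_exists_fun']
  exact ⟨fun ⟨a, h⟩ => ⟨a, h.symm⟩, fun ⟨a, h⟩ => ⟨a, h.symm⟩⟩

theorem U_mono {s t : Set ℕ} (h : s ⊆ t) : ctx.U s ≤ ctx.U t :=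
  Submodule.span_mono (Set.image_mono h)

theorem U_disj {s t : Set ℕ} (h : Disjoint s t) : Disjoint (ctx.U s) (ctx.U t) :=
  ctx.e_indep.disjoint_span_image h

theorem U_union (s t : Set ℕ) : ctx.U (s ∪ t) = ctx.U s ⊔ ctx.U t := by
  unfold U
  rw [Set.image_union, Submodule.span_union]

theorem U_inter {s t : Set ℕ} {x : 𝒲} (h1 : x ∈ ctx.U s) (h2 : x ∈ ctx.U t) :
    x ∈ ctx.U (s ∩ t) := by
  have : s = (s ∩ t) ∪ (s \ t) := by simp
  rw [this, U_union] at h1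
  obtain ⟨u, hu, v, hv, rfl⟩ := Submodule.mem_sup.1 h1
  have hv2 : v ∈ ctx.U t := by
    have := (ctx.U t).sub_mem h2 (ctx.U_mono Set.inter_subset_right hu)
    simpa using this
  have : v = 0 := by
    have := (ctx.U_disj (Set.disjoint_sdiff_left (s := t) (t := s)))
    exact Submodule.disjoint_def.1 this v hv hv2
  subst this
  simpa using hu

theorem U_exists_fin {s : Set ℕ} {x : 𝒲} (h : x ∈ ctx.U s) :
    ∃ t : Finset ℕ, ↑t ⊆ s ∧ x ∈ ctx.U ↑t := by
  unfold U at *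
  rw [Submodule.mem_span_image_iff_exists_fun] at h
  obtain ⟨t, ht, c, hc⟩ := h
  refine ⟨t, ht, ?_⟩
  rw [← hc]
  refine Submodule.sum_mem _ fun i _ => Submodule.smul_mem _ _ (Submodule.subset_span ⟨i, by simp, rfl⟩)

theorem natLt_iff (n : ℕ) (F : Set 𝒲) : ctx.NatLt n F ↔ F ⊆ ctx.U (Set.Ioi n) := by
  constructor
  · intro h x hx
    obtain ⟨s, h1, h2⟩ := h x hx
    rw [suppIn_iff] at h1
    exact ctx.U_mono h2 h1
  · intro h x hx
    obtain ⟨t, h1, h2⟩ := ctx.U_exists_fin (h hx)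
    exact ⟨t, (ctx.suppIn_iff _ _).2 h2, h1⟩

theorem fspan_eq (S : Set 𝒲) : ctx.fspan S = (Submodule.span ctx.𝔽 S : Set 𝒲) := by
  ext v
  simp only [fspan, Set.mem_ofPred_eq, SetLike.mem_coe]
  constructor
  · rintro ⟨t, ht, c, hc, rfl⟩
    refine Submodule.sum_mem _ fun w hw => ?_
    exact Submodule.smul_mem _ (⟨c w, hc w⟩ : ctx.𝔽) (Submodule.subset_span (ht hw))
  · intro h
    have h' : v ∈ Submodule.span ctx.𝔽 (id '' S) := by simpa using h
    rw [Submodule.mem_span_image_iff_exists_fun] at h'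
    obtain ⟨t, ht, c, hc⟩ := h'
    classical
    refine ⟨t, ht, fun w => if hw : w ∈ t then (c ⟨w, hw⟩ : ℝ) else 0, ?_, ?_⟩
    · intro w
      dsimp only
      split_ifs
      · exact Subtype.property _
      · exact ctx.𝔽.zero_mem
    · rw [← hc, ← Finset.sum_coe_sort t]
      refine Finset.sum_congr rfl fun w _ => ?_
      simp [Subfield.smul_def]

end Frame
end Rosendal

namespace Rosendal
namespace Frame
variable {𝒲 : Type} [NormedAddCommGroup 𝒲] [NormedSpace ℝ 𝒲] (ctx : Frame 𝒲)

theorem subset_fspan (S : Set 𝒲) : S ⊆ ctx.fspan S := by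
  rw [fspan_eq]; exact Submodule.subset_span

theorem fspan_mono {S T : Set 𝒲} (h : S ⊆ T) : ctx.fspan S ⊆ ctx.fspan T := by
  rw [fspan_eq, fspan_eq]; exact Submodule.span_mono h

theorem fspan_le {S T : Set 𝒲} (h : S ⊆ ctx.fspan T) : ctx.fspan S ⊆ ctx.fspan T := by
  rw [fspan_eq, fspan_eq] at *; exact Submodule.span_le.2 h

theorem fspan_fspan (S : Set 𝒲) : ctx.fspan (ctx.fspan S) = ctx.fspan S :=
  Set.Subset.antisymm (ctx.fspan_le subset_rfl) (ctx.subset_fspan _)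

theorem fspan_union_left (A B : Set 𝒲) : ctx.fspan (ctx.fspan A ∪ B) = ctx.fspan (A ∪ B) := by
  apply Set.Subset.antisymm
  · apply ctx.fspan_le
    exact Set.union_subset (ctx.fspan_mono Set.subset_union_left)
      (Set.subset_union_right.trans (ctx.subset_fspan _))
  · exact ctx.fspan_mono (Set.union_subset_union_left _ (ctx.subset_fspan _))

theorem fspan_union_right (A B : Set 𝒲) : ctx.fspan (A ∪ ctx.fspan B) = ctx.fspan (A ∪ B) := by
  rw [Set.union_comm, fspan_union_left, Set.union_comm]

theorem fspan_assoc (A B C : Set 𝒲) :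
    ctx.fspan (ctx.fspan (A ∪ B) ∪ C) = ctx.fspan (A ∪ ctx.fspan (B ∪ C)) := by
  rw [fspan_union_left, fspan_union_right, Set.union_assoc]

theorem fspan_sub_U {S : Set 𝒲} {s : Set ℕ} (h : S ⊆ ctx.U s) : ctx.fspan S ⊆ ctx.U s := by
  rw [fspan_eq]
  have : Submodule.span ctx.𝔽 S ≤ (ctx.U s).restrictScalars ctx.𝔽 := Submodule.span_le.2 h
  exact this

variable {ctx}

theorem IsFinDimIn.of_subset {F X X' : Set 𝒲} (h : ctx.IsFinDimIn F X) (h' : F ⊆ X') :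
    ctx.IsFinDimIn F X' := by
  obtain ⟨t, _, rfl⟩ := h
  exact ⟨t, (ctx.subset_fspan _).trans h', rfl⟩

theorem IsFinDimIn.mono {F X X' : Set 𝒲} (h : ctx.IsFinDimIn F X) (h' : X ⊆ X') :
    ctx.IsFinDimIn F X' := by
  obtain ⟨t, ht, rfl⟩ := h
  exact ⟨t, ht.trans h', rfl⟩

theorem IsFinDimIn.union {A B X : Set 𝒲} (hA : ctx.IsFinDimIn A X) (hB : ctx.IsFinDimIn B X) :
    ctx.IsFinDimIn (ctx.fspan (A ∪ B)) X := by
  classical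
  obtain ⟨t, ht, rfl⟩ := hA
  obtain ⟨t', ht', rfl⟩ := hB
  refine ⟨t ∪ t', by simp [ht, ht'], ?_⟩
  rw [fspan_union_left, fspan_union_right, Finset.coe_union]

theorem isFinDimIn_empty (X : Set 𝒲) : ctx.IsFinDimIn (ctx.fspan ∅) X :=
  ⟨∅, by simp, by simp⟩

theorem IsBlockSubspaceOf.bs {Y X : Set 𝒲} (h : ctx.IsBlockSubspaceOf Y X) :
    ctx.IsBlockSubspace Y := by
  obtain ⟨y, hy, -, rfl⟩ := h
  exact ⟨y, hy, hy.1, rfl⟩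

theorem IsBlockSubspace.fspan_self {X : Set 𝒲} (h : ctx.IsBlockSubspace X) :
    ctx.fspan X = X := by
  obtain ⟨y, hy, -, rfl⟩ := h
  exact ctx.fspan_fspan _

theorem IsBlockSubspace.fspan_sub {X S : Set 𝒲} (h : ctx.IsBlockSubspace X) (hS : S ⊆ X) :
    ctx.fspan S ⊆ X := by
  rw [← h.fspan_self]; exact ctx.fspan_mono hS

theorem fspan_sub_W {S : Set 𝒲} (hS : S ⊆ ctx.W) : ctx.fspan S ⊆ ctx.W :=
  ctx.fspan_le hS

theorem IsBlockSubspace.sub_W {X : Set 𝒲} (h : ctx.IsBlockSubspace X) : X ⊆ ctx.W := by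
  obtain ⟨y, hy, h1, rfl⟩ := h
  apply fspan_sub_W
  rintro _ ⟨n, rfl⟩
  exact h1 n

theorem IsFinDimIn.sub {F X : Set 𝒲} (h : ctx.IsFinDimIn F X) (hX : ctx.IsBlockSubspace X) :
    F ⊆ X := by
  obtain ⟨t, ht, rfl⟩ := h
  exact hX.fspan_sub ht

theorem IsFinDimIn.sub_W {F : Set 𝒲} (h : ctx.IsFinDimIn F ctx.W) : F ⊆ ctx.W := by
  obtain ⟨t, ht, rfl⟩ := h
  exact fspan_sub_W ht

theorem IsBlockSubspaceOf.sub {Y X : Set 𝒲} (h : ctx.IsBlockSubspaceOf Y X)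
    (hX : ctx.IsBlockSubspace X) : Y ⊆ X := by
  obtain ⟨y, hy, h1, rfl⟩ := h
  apply hX.fspan_sub
  rintro _ ⟨n, rfl⟩
  exact h1 n

theorem IsBlockSubspace.of {Y X : Set 𝒲} (h : ctx.IsBlockSubspace Y) (h' : Y ⊆ X) :
    ctx.IsBlockSubspaceOf Y X := by
  obtain ⟨y, hy, h1, rfl⟩ := h
  exact ⟨y, hy, fun n => h' (ctx.subset_fspan _ ⟨n, rfl⟩), rfl⟩

theorem isBlockSeq_iff (y : ℕ → 𝒲) : ctx.IsBlockSeq y ↔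
    (∀ n, y n ∈ ctx.W) ∧ (∀ n, y n ≠ 0) ∧ ∃ D : ℕ → Finset ℕ, (∀ n, y n ∈ ctx.U ↑(D n)) ∧
      ∀ n, ∀ i ∈ D n, ∀ j ∈ D (n + 1), i < j := by
  unfold IsBlockSeq BlockSeqRel W
  simp only [suppIn_iff]

theorem D_nonempty {y : ℕ → 𝒲} {D : ℕ → Finset ℕ} (h0 : ∀ n, y n ≠ 0)
    (hD : ∀ n, y n ∈ ctx.U ↑(D n)) (n : ℕ) : (D n).Nonempty := by
  rw [Finset.nonempty_iff_ne_empty]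
  intro h
  have := hD n
  rw [h] at this
  simp [U] at this
  exact h0 n this

theorem D_lt {D : ℕ → Finset ℕ} (hne : ∀ n, (D n).Nonempty)
    (hD : ∀ n, ∀ i ∈ D n, ∀ j ∈ D (n + 1), i < j) {m n : ℕ} (hmn : m < n) :
    ∀ i ∈ D m, ∀ j ∈ D n, i < j := by
  induction n, hmn using Nat.le_induction with
  | base => exact hD m
  | succ n hn ih =>
    intro i hi j hj
    obtain ⟨k, hk⟩ := hne n
    exact (ih i hi k hk).trans (hD n k hk j hj)

theorem D_ge {D : ℕ → Finset ℕ} (hne : ∀ n, (D n).Nonempty)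
    (hD : ∀ n, ∀ i ∈ D n, ∀ j ∈ D (n + 1), i < j) (n : ℕ) : ∀ i ∈ D n, n ≤ i := by
  induction n with
  | zero => intros; omega
  | succ n ih =>
    intro i hi
    obtain ⟨k, hk⟩ := hne n
    have := hD n k hk i hi
    have := ih k hk
    omega

theorem IsBlockSeq.mem_U {y : ℕ → 𝒲} (hy : ctx.IsBlockSeq y) {n i : ℕ} (h : n < i) :
    y i ∈ ctx.U (Set.Ioi n) := by
  rw [isBlockSeq_iff] at hy
  obtain ⟨h1, h2, D, h3, h4⟩ := hy
  refine ctx.U_mono ?_ (h3 i)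
  intro j hj
  exact lt_of_lt_of_le h (D_ge (D_nonempty h2 h3) h4 i j hj)

theorem IsBlockSeq.shift {y : ℕ → 𝒲} (hy : ctx.IsBlockSeq y) (m : ℕ) :
    ctx.IsBlockSeq (fun i => y (i + m)) := by
  rw [isBlockSeq_iff] at *
  obtain ⟨h1, h2, D, h3, h4⟩ := hy
  refine ⟨fun n => h1 _, fun n => h2 _, fun n => D (n + m), fun n => h3 _, fun n => ?_⟩
  have := h4 (n + m)
  rwa [show n + m + 1 = n + 1 + m by ring] at this

theorem IsBlockSeq.bs {y : ℕ → 𝒲} (hy : ctx.IsBlockSeq y) :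
    ctx.IsBlockSubspace (ctx.fspan (Set.range y)) := ⟨y, hy, hy.1, rfl⟩

theorem IsBlockSubspace.tail {Y : Set 𝒲} (hY : ctx.IsBlockSubspace Y) (n : ℕ) :
    ∃ Y', ctx.IsBlockSubspace Y' ∧ Y' ⊆ Y ∧ Y' ⊆ ctx.U (Set.Ioi n) := by
  obtain ⟨y, hy, h1, rfl⟩ := hY
  refine ⟨_, (hy.shift (n+1)).bs, ?_, ?_⟩
  · apply ctx.fspan_mono
    rintro _ ⟨i, rfl⟩
    exact ⟨_, rfl⟩
  · apply ctx.fspan_sub_U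
    rintro _ ⟨i, rfl⟩
    exact hy.mem_U (by omega)

theorem IsBlockSubspace.exists_ne {Y : Set 𝒲} (hY : ctx.IsBlockSubspace Y) (n : ℕ) :
    ∃ x ∈ Y, x ≠ 0 ∧ ∃ N, n < N ∧ x ∈ ctx.U (Set.Ioc n N) := by
  obtain ⟨Y', h1, h2, h3⟩ := hY.tail n
  obtain ⟨y, hy, -, rfl⟩ := h1
  have hm : y 0 ∈ ctx.fspan (Set.range y) := ctx.subset_fspan _ ⟨0, rfl⟩
  refine ⟨y 0, h2 hm, hy.2.1 0, ?_⟩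
  obtain ⟨t, ht, hyt⟩ := ctx.U_exists_fin (h3 hm)
  refine ⟨max (n+1) (t.sup id), by omega, ctx.U_mono ?_ hyt⟩
  intro i hi
  have := ht hi
  have h4 : i ≤ t.sup id := Finset.le_sup (f := id) hi
  simp only [Set.mem_Ioi, Set.mem_Ioc] at *
  omega

variable (ctx) in
theorem diag (Φ : ℕ → ℕ → Set 𝒲 → Prop)
    (h : ∀ n N X, ctx.IsBlockSubspace X → ∃ Y, ctx.IsBlockSubspace Y ∧ Y ⊆ X ∧ Φ n N Y)
    (X₀ : Set 𝒲) (hX₀ : ctx.IsBlockSubspace X₀) :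
    ∃ X, ctx.IsBlockSubspace X ∧ X ⊆ X₀ ∧
      ∀ n, ∃ N Y, ctx.IsBlockSubspace Y ∧ Φ n N Y ∧ X ∩ ctx.U (Set.Ioi N) ⊆ Y := by
  have step : ∀ (n : ℕ) (s : {X : Set 𝒲 // ctx.IsBlockSubspace X} × ℕ),
      ∃ (s' : {X : Set 𝒲 // ctx.IsBlockSubspace X} × ℕ) (x : 𝒲),
        s'.1.1 ⊆ s.1.1 ∧ Φ n s.2 s'.1.1 ∧ x ∈ s'.1.1 ∧ x ≠ 0 ∧ s.2 < s'.2 ∧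
          x ∈ ctx.U (Set.Ioc s.2 s'.2) := by
    rintro n ⟨⟨X, hX⟩, N⟩
    obtain ⟨Y, h1, h2, h3⟩ := h n N X hX
    obtain ⟨x, h4, h5, N', h6, h7⟩ := h1.exists_ne N
    exact ⟨⟨⟨Y, h1⟩, N'⟩, x, h2, h3, h4, h5, h6, h7⟩
  choose f x hf using step
  let s : ℕ → {X : Set 𝒲 // ctx.IsBlockSubspace X} × ℕ :=
    fun n => Nat.rec ⟨⟨X₀, hX₀⟩, 0⟩ (fun n s => f n s) n
  have hs : ∀ n, s (n+1) = f n (s n) := fun n => rfl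
  let v : ℕ → 𝒲 := fun n => x n (s n)
  have hv : ∀ n, (s (n+1)).1.1 ⊆ (s n).1.1 ∧ Φ n (s n).2 (s (n+1)).1.1 ∧ v n ∈ (s (n+1)).1.1 ∧
      v n ≠ 0 ∧ (s n).2 < (s (n+1)).2 ∧ v n ∈ ctx.U (Set.Ioc (s n).2 (s (n+1)).2) :=
    fun n => hf n (s n)
  have hmono : StrictMono (fun n => (s n).2) := strictMono_nat_of_lt_succ fun n => (hv n).2.2.2.2.1
  have hanti : Antitone (fun n => (s n).1.1) := antitone_nat_of_succ_le fun n => (hv n).1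
  have hblock : ctx.IsBlockSeq v := by
    rw [isBlockSeq_iff]
    refine ⟨fun n => (s (n+1)).1.2.sub_W (hv n).2.2.1, fun n => (hv n).2.2.2.1,
      fun n => Finset.Ioc (s n).2 (s (n+1)).2, fun n => by simpa using (hv n).2.2.2.2.2, ?_⟩
    intro n i hi j hj
    simp only [Finset.mem_Ioc] at hi hj
    omega
  refine ⟨_, hblock.bs, ?_, fun n => ⟨(s n).2, (s (n+1)).1.1, (s (n+1)).1.2, (hv n).2.1, ?_⟩⟩
  · apply hX₀.fspan_sub
    rintro _ ⟨n, rfl⟩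
    exact hanti (Nat.zero_le (n+1)) (hv n).2.2.1
  · rintro w ⟨hw, hwU⟩
    have hr : Set.range v = v '' (Set.Iio n) ∪ v '' (Set.Ici n) := by
      rw [← Set.image_union, Set.Iio_union_Ici, Set.image_univ]
    rw [fspan_eq, hr, Submodule.span_union] at hw
    obtain ⟨a, ha, b, hb, rfl⟩ := Submodule.mem_sup.1 hw
    have ha' : a ∈ ctx.U (Set.Iic (s n).2) := by
      have : a ∈ ctx.fspan (v '' (Set.Iio n)) := by rw [fspan_eq]; exact ha
      refine ctx.fspan_sub_U ?_ this
      rintro _ ⟨i, hi, rfl⟩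
      refine ctx.U_mono ?_ (hv i).2.2.2.2.2
      intro j hj
      exact hj.2.trans (hmono.monotone (Nat.succ_le_of_lt hi))
    have hb0 : b ∈ ctx.fspan (v '' (Set.Ici n)) := by rw [fspan_eq]; exact hb
    have hb' : b ∈ ctx.U (Set.Ioi (s n).2) := by
      refine ctx.fspan_sub_U ?_ hb0
      rintro _ ⟨i, hi, rfl⟩
      refine ctx.U_mono ?_ (hv i).2.2.2.2.2
      intro j hj
      exact lt_of_le_of_lt (hmono.monotone hi) hj.1
    have ha2 : a ∈ ctx.U (Set.Ioi (s n).2) := by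
      have := (ctx.U _).sub_mem hwU hb'
      simpa using this
    have ha0 : a = 0 := Submodule.disjoint_def.1
      (ctx.U_disj (Set.Iic_disjoint_Ioi le_rfl)) a ha' ha2
    rw [ha0, zero_add]
    refine (s (n+1)).1.2.fspan_sub ?_ hb0
    rintro _ ⟨i, hi, rfl⟩
    exact hanti (Nat.succ_le_succ hi) (hv i).2.2.1

variable (ctx) in
theorem decide_lemma {ι : Type*} [Countable ι] (P : ι → Set 𝒲 → Prop)
    (hP : ∀ i X Y, ctx.IsBlockSubspace X → ctx.IsBlockSubspace Y → Y ⊆ X → P i X → P i Y)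
    (X₀ : Set 𝒲) (hX₀ : ctx.IsBlockSubspace X₀) :
    ∃ X, ctx.IsBlockSubspace X ∧ X ⊆ X₀ ∧ ∀ i,
      (∃ N Y, ctx.IsBlockSubspace Y ∧ P i Y ∧ X ∩ ctx.U (Set.Ioi N) ⊆ Y) ∨
      (∀ Z, ctx.IsBlockSubspace Z → Z ⊆ X → ¬ P i Z) := by
  rcases isEmpty_or_nonempty ι with he | he
  · exact ⟨X₀, hX₀, subset_rfl, fun i => he.elim i⟩
  obtain ⟨f, hf⟩ := exists_surjective_nat ι
  obtain ⟨X, h1, h2, h3⟩ := ctx.diag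
    (fun n _ Y => P (f n) Y ∨ ∀ Z, ctx.IsBlockSubspace Z → Z ⊆ Y → ¬ P (f n) Z) (by
      intro n N X hX
      by_cases h : ∃ Z, ctx.IsBlockSubspace Z ∧ Z ⊆ X ∧ P (f n) Z
      · obtain ⟨Z, a, b, c⟩ := h
        exact ⟨Z, a, b, Or.inl c⟩
      · push Not at h
        exact ⟨X, hX, subset_rfl, Or.inr h⟩) X₀ hX₀
  refine ⟨X, h1, h2, fun i => ?_⟩
  obtain ⟨n, rfl⟩ := hf i
  obtain ⟨N, Y, h4, h5 | h5, h6⟩ := h3 n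
  · exact Or.inl ⟨N, Y, h4, h5, h6⟩
  · right
    intro Z hZ hZX hPZ
    obtain ⟨Z', a, b, c⟩ := hZ.tail N
    exact h5 Z' a (fun z hz => h6 ⟨hZX (b hz), c hz⟩) (hP _ _ _ hZ a b hPZ)

end Frame
end Rosendal

namespace Rosendal
namespace Frame
variable {𝒲 : Type} [NormedAddCommGroup 𝒲] [NormedSpace ℝ 𝒲] {ctx : Frame 𝒲}

theorem IIWinsF_iff (X : Set 𝒲) (S : Set (List 𝒲)) (β : Ordinal) (Facc : Set 𝒲)
    (vec : List 𝒲) : ctx.IIWinsF X S β Facc vec ↔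
      ∀ n : ℕ, ∀ ξ : Ordinal, ξ < β →
        ∃ F : Set 𝒲, ctx.IsFinDimIn F X ∧ ctx.NatLt n F ∧
          ∃ x : 𝒲, x ≠ 0 ∧ x ∈ ctx.fspan (Facc ∪ F) ∧
            (ξ = 0 → vec ++ [x] ∈ S) ∧
            (ξ ≠ 0 → ctx.IIWinsF X S ξ (ctx.fspan (Facc ∪ F)) (vec ++ [x])) := by
  conv_lhs => unfold IIWinsF
  rw [WellFounded.fix_eq]
  rfl

theorem IWinsF_iff (X : Set 𝒲) (S : Set (List 𝒲)) (β : Ordinal) (Facc : Set 𝒲)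
    (vec : List 𝒲) : ctx.IWinsF X S β Facc vec ↔
      ∃ n : ℕ, ∃ ξ : Ordinal, ξ < β ∧
        ∀ F : Set 𝒲, ctx.IsFinDimIn F X → ctx.NatLt n F →
        ∀ x : 𝒲, x ≠ 0 → x ∈ ctx.fspan (Facc ∪ F) →
          (ξ = 0 → vec ++ [x] ∈ S) ∧
          (ξ ≠ 0 → ctx.IWinsF X S ξ (ctx.fspan (Facc ∪ F)) (vec ++ [x])) := by
  conv_lhs => unfold IWinsF
  rw [WellFounded.fix_eq]
  simp only [exists_prop]
  rfl

theorem IIWinsG_iff (X : Set 𝒲) (S : Set (List 𝒲)) (α : Ordinal) (Facc : Set 𝒲)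
    (vec : List 𝒲) : ctx.IIWinsG X S α Facc vec ↔
      ∀ Y : Set 𝒲, ctx.IsBlockSubspaceOf Y X →
      ∀ ξ : Ordinal, ξ < α →
        ∃ F : Set 𝒲, ctx.IsFinDimIn F Y ∧
          ∃ x : 𝒲, x ≠ 0 ∧ x ∈ ctx.fspan (Facc ∪ F) ∧
            (ξ = 0 → vec ++ [x] ∈ S) ∧
            (ξ ≠ 0 → ctx.IIWinsG X S ξ (ctx.fspan (Facc ∪ F)) (vec ++ [x])) := by
  conv_lhs => unfold IIWinsG
  rw [WellFounded.fix_eq]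
  rfl

theorem IIWinsA_iff (X : Set 𝒲) (S : Set (List 𝒲)) (α : Ordinal) (Eacc Facc : Set 𝒲)
    (vec : List 𝒲) : ctx.IIWinsA X S α Eacc Facc vec ↔
      ∃ n : ℕ,
        ∀ E : Set 𝒲, ctx.IsFinDimIn E X → ctx.NatLt n E →
        ∀ x : 𝒲, x ≠ 0 → x ∈ ctx.fspan (Eacc ∪ E) →
        ∀ Y : Set 𝒲, ctx.IsBlockSubspaceOf Y X →
        ∀ ξ : Ordinal, ξ < α →
          ∃ F : Set 𝒲, ctx.IsFinDimIn F Y ∧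
            ∃ y : 𝒲, y ≠ 0 ∧ y ∈ ctx.fspan (Facc ∪ F) ∧
              (ξ = 0 → vec ++ [x, y] ∈ S) ∧
              (ξ ≠ 0 → ctx.IIWinsA X S ξ (ctx.fspan (Eacc ∪ E)) (ctx.fspan (Facc ∪ F))
                (vec ++ [x, y])) := by
  conv_lhs => unfold IIWinsA
  rw [WellFounded.fix_eq]
  rfl

theorem IWinsB_iff (X : Set 𝒲) (S : Set (List 𝒲)) (α : Ordinal) (Eacc Facc : Set 𝒲)
    (vec : List 𝒲) : ctx.IWinsB X S α Eacc Facc vec ↔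
      ∀ Y : Set 𝒲, ctx.IsBlockSubspaceOf Y X →
        ∃ E : Set 𝒲, ctx.IsFinDimIn E Y ∧
          ∃ x : 𝒲, x ≠ 0 ∧ x ∈ ctx.fspan (Eacc ∪ E) ∧
            ∃ n : ℕ, ∃ ξ : Ordinal, ξ < α ∧
              ∀ F : Set 𝒲, ctx.IsFinDimIn F X → ctx.NatLt n F →
              ∀ y : 𝒲, y ≠ 0 → y ∈ ctx.fspan (Facc ∪ F) →
                (ξ = 0 → vec ++ [x, y] ∈ S) ∧
                (ξ ≠ 0 → ctx.IWinsB X S ξ (ctx.fspan (Eacc ∪ E)) (ctx.fspan (Facc ∪ F))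
                  (vec ++ [x, y])) := by
  conv_lhs => unfold IWinsB
  rw [WellFounded.fix_eq]
  simp only [exists_prop]
  rfl

theorem F_det (X : Set 𝒲) (S : Set (List 𝒲)) (β : Ordinal) : ∀ (Facc : Set 𝒲)
    (vec : List 𝒲), ¬ ctx.IWinsF X Sᶜ β Facc vec → ctx.IIWinsF X S β Facc vec := by
  induction β using WellFoundedLT.induction with
  | ind β ih =>
    intro Facc vec h
    rw [IWinsF_iff] at h
    rw [IIWinsF_iff]
    intro n ξ hξ
    push Not at h
    obtain ⟨F, h1, h2, x, h3, h4, h5⟩ := h n ξ hξ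
    refine ⟨F, h1, h2, x, h3, h4, ?_⟩
    by_cases h0 : ξ = 0
    · refine ⟨fun _ => ?_, fun h => absurd h0 h⟩
      by_contra hc
      exact (h5 fun _ => hc).1 h0
    · exact ⟨fun h => absurd h h0, fun _ => ih ξ hξ _ _ (h5 fun h => absurd h h0).2⟩

theorem IWinsF_mono {X X' : Set 𝒲} (hX' : ctx.IsBlockSubspace X')
    {N : ℕ} (hXX : X' ∩ ctx.U (Set.Ioi N) ⊆ X) {S S' : Set (List 𝒲)} (hS : S ⊆ S')
    (β : Ordinal) : ∀ (Facc : Set 𝒲) (vec : List 𝒲),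
    ctx.IWinsF X S β Facc vec → ctx.IWinsF X' S' β Facc vec := by
  induction β using WellFoundedLT.induction with
  | ind β ih =>
    intro Facc vec h
    rw [IWinsF_iff] at *
    obtain ⟨n, ξ, hξ, h⟩ := h
    refine ⟨max n N, ξ, hξ, fun F hF hn x hx hxF => ?_⟩
    rw [natLt_iff] at hn
    have hF' : ctx.IsFinDimIn F X := hF.of_subset fun v hv =>
      hXX ⟨hF.sub hX' hv, ctx.U_mono (Set.Ioi_subset_Ioi (le_max_right _ _)) (hn hv)⟩
    have := h F hF' ((ctx.natLt_iff _ _).2 (hn.trans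
      (ctx.U_mono (Set.Ioi_subset_Ioi (le_max_left _ _))))) x hx hxF
    exact ⟨fun h0 => hS (this.1 h0), fun h0 => ih ξ hξ _ _ (this.2 h0)⟩

theorem IIWinsA_mono {X X' : Set 𝒲} (hX' : ctx.IsBlockSubspace X')
    {N : ℕ} (hXX : X' ∩ ctx.U (Set.Ioi N) ⊆ X) {S : Set (List 𝒲)}
    (β : Ordinal) : ∀ (Eacc Facc : Set 𝒲) (vec : List 𝒲),
    ctx.IIWinsA X S β Eacc Facc vec → ctx.IIWinsA X' S β Eacc Facc vec := by
  induction β using WellFoundedLT.induction with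
  | ind β ih =>
    intro Eacc Facc vec h
    rw [IIWinsA_iff] at *
    obtain ⟨n, h⟩ := h
    refine ⟨max n N, fun E hE hn x hx hxE Y hY ξ hξ => ?_⟩
    rw [natLt_iff] at hn
    have hE' : ctx.IsFinDimIn E X := hE.of_subset fun v hv =>
      hXX ⟨hE.sub hX' hv, ctx.U_mono (Set.Ioi_subset_Ioi (le_max_right _ _)) (hn hv)⟩
    obtain ⟨Y', hY1, hY2, hY3⟩ := hY.bs.tail N
    obtain ⟨F, hF, y, hy, hyF, h1, h2⟩ := h E hE' ((ctx.natLt_iff _ _).2 (hn.trans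
      (ctx.U_mono (Set.Ioi_subset_Ioi (le_max_left _ _))))) x hx hxE Y'
      (hY1.of fun v hv => hXX ⟨hY.sub hX' (hY2 hv), hY3 hv⟩) ξ hξ
    exact ⟨F, hF.mono hY2, y, hy, hyF, h1, fun h0 => ih ξ hξ _ _ _ (h2 h0)⟩

theorem W_countable : Countable ctx.W := by
  have := ctx.countable
  have hc : Countable ctx.𝔽 := this.to_subtype
  rw [Set.countable_coe_iff]
  have : ctx.W ⊆ Set.range (fun c : ℕ →₀ ctx.𝔽 => c.sum fun i a => a • ctx.e i) := by
    intro x hx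
    unfold W at hx
    rw [fspan_eq] at hx
    obtain ⟨c, hc⟩ := Finsupp.mem_span_range_iff_exists_finsupp.1 hx
    exact ⟨c, hc⟩
  exact (Set.countable_range _).mono this

theorem FD_countable : Countable {F : Set 𝒲 // ctx.IsFinDimIn F ctx.W} := by
  classical
  have := ctx.W_countable
  have : {F : Set 𝒲 | ctx.IsFinDimIn F ctx.W} ⊆
      Set.range (fun t : Finset ctx.W => ctx.fspan (Subtype.val '' (↑t : Set ctx.W))) := by
    rintro F ⟨t, ht, rfl⟩
    refine ⟨t.subtype (· ∈ ctx.W), ?_⟩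
    dsimp only
    congr 1
    ext x
    simp
    exact fun h => ht h
  exact ((Set.countable_range _).mono this).to_subtype

theorem ramsey {α : Ordinal} (hα : α < (Cardinal.aleph 1).ord) (S : Set (List 𝒲))
    (X₀ : Set 𝒲) (hX₀ : ctx.IsBlockSubspace X₀) :
    ∃ X, ctx.IsBlockSubspace X ∧ X ⊆ X₀ ∧
      (ctx.IIWinsA X S α (ctx.fspan ∅) (ctx.fspan ∅) [] ∨
       ctx.IWinsB X Sᶜ α (ctx.fspan ∅) (ctx.fspan ∅) []) := by
  have hcα : Countable (Set.Iic α) := by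
    rw [Set.countable_coe_iff, ← Set.Iio_insert]
    refine Set.Countable.insert _ ?_
    rw [← Cardinal.le_aleph0_iff_set_countable, Cardinal.mk_Iio_ordinal,
      Cardinal.lift_le_aleph0, ← Cardinal.lt_aleph_one_iff]
    exact Cardinal.lt_ord.1 hα
  have hcW := ctx.W_countable
  have hcF := ctx.FD_countable
  obtain ⟨X₁, hX₁, hX₁₀, hd₁⟩ := ctx.decide_lemma
    (ι := Set.Iic α × {F : Set 𝒲 // ctx.IsFinDimIn F ctx.W} ×
      {F : Set 𝒲 // ctx.IsFinDimIn F ctx.W} × List ctx.W)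
    (fun i Y => ctx.IIWinsA Y S i.1.1 i.2.1.1 i.2.2.1.1 (i.2.2.2.map Subtype.val))
    (by
      intro i X Y hX hY hYX h
      exact IIWinsA_mono (N := 0) hY (Set.inter_subset_left.trans hYX) _ _ _ _ h) X₀ hX₀
  obtain ⟨X₂, hX₂, hX₂₁, hd₂⟩ := ctx.decide_lemma
    (ι := Set.Iic α × {F : Set 𝒲 // ctx.IsFinDimIn F ctx.W} ×
      {F : Set 𝒲 // ctx.IsFinDimIn F ctx.W} × List ctx.W × ctx.W)
    (fun j Z => ∀ F, ctx.IsFinDimIn F Z → ∀ y : 𝒲, y ≠ 0 → y ∈ ctx.fspan (j.2.2.1.1 ∪ F) →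
      (j.1.1 = 0 → j.2.2.2.1.map Subtype.val ++ [j.2.2.2.2.1, y] ∈ Sᶜ) ∧
      (j.1.1 ≠ 0 → ¬ ctx.IIWinsA X₁ S j.1.1 j.2.1.1 (ctx.fspan (j.2.2.1.1 ∪ F))
        (j.2.2.2.1.map Subtype.val ++ [j.2.2.2.2.1, y])))
    (by
      intro j X Y hX hY hYX h F hF
      exact h F (hF.mono hYX)) X₁ hX₁
  have bad : ∀ β ≤ α, ∀ E F, ctx.IsFinDimIn E ctx.W → ctx.IsFinDimIn F ctx.W →
      ∀ vec : List 𝒲, (∀ v ∈ vec, v ∈ ctx.W) → ¬ ctx.IIWinsA X₁ S β E F vec →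
      ∀ Z, ctx.IsBlockSubspace Z → Z ⊆ X₁ → ¬ ctx.IIWinsA Z S β E F vec := by
    intro β hβ E F hE hF vec hvec hn
    lift vec to List ctx.W using hvec
    rcases hd₁ (⟨β, hβ⟩, ⟨E, hE⟩, ⟨F, hF⟩, vec) with ⟨N, Y, hY, h1, h2⟩ | h
    · exact absurd (IIWinsA_mono hX₁ h2 _ _ _ _ h1) hn
    · exact h
  have key : ∀ β ≤ α, ∀ E F, ctx.IsFinDimIn E ctx.W → ctx.IsFinDimIn F ctx.W →
      ∀ vec : List 𝒲, (∀ v ∈ vec, v ∈ ctx.W) → ¬ ctx.IIWinsA X₁ S β E F vec →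
      ctx.IWinsB X₂ Sᶜ β E F vec := by
    intro β
    induction β using WellFoundedLT.induction with
    | ind β ih =>
      intro hβ Eacc Facc hEacc hFacc vec hvec hn
      rw [IWinsB_iff]
      intro Y hY
      have hY2 := hY.sub hX₂
      have hb := bad β hβ Eacc Facc hEacc hFacc vec hvec hn Y hY.bs (hY2.trans hX₂₁)
      rw [IIWinsA_iff] at hb
      push Not at hb
      obtain ⟨E, hE, -, x, hx, hxE, Z, hZ, ξ, hξ, hb⟩ := hb 0
      have hEW := hE.mono hY.bs.sub_W
      have hE' := hEacc.union hEW
      have hxW : x ∈ ctx.W := hE'.sub_W hxE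
      have hZY := hZ.sub hY.bs
      refine ⟨E, hE, x, hx, hxE, ?_⟩
      have hd := hd₂ (⟨ξ, hξ.le.trans hβ⟩, ⟨_, hE'⟩, ⟨Facc, hFacc⟩, vec.pmap Subtype.mk hvec, ⟨x, hxW⟩)
      have hmap : (vec.pmap Subtype.mk hvec).map Subtype.val = vec := by
        rw [List.map_pmap]; simp
      simp only [hmap] at hd
      have hd' := hd.resolve_right (by
        intro hc
        refine hc Z hZ.bs (hZY.trans hY2) ?_
        intro F hF y hy hyF
        have := hb F hF y hy hyF
        by_cases h0 : ξ = 0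
        · refine ⟨fun _ hc => (this fun _ => hc).1 h0, fun h => absurd h0 h⟩
        · refine ⟨fun h => absurd h h0, fun _ hc => ?_⟩
          exact (this fun h => absurd h h0).2
            (IIWinsA_mono (N := 0) hY.bs (Set.inter_subset_left.trans (hY2.trans hX₂₁)) _ _ _ _ hc))
      obtain ⟨N, Z', hZ', hQ, hN⟩ := hd'
      refine ⟨N, ξ, hξ, fun F hF hNF y hy hyF => ?_⟩
      rw [natLt_iff] at hNF
      have := hQ F (hF.of_subset fun v hv => hN ⟨hF.sub hX₂ hv, hNF hv⟩) y hy hyF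
      refine ⟨this.1, fun h0 => ?_⟩
      have hF' := hFacc.union (hF.mono hX₂.sub_W)
      refine ih ξ hξ (hξ.le.trans hβ) _ _ hE' hF' _ ?_ (this.2 h0)
      intro v hv
      simp only [List.mem_append, List.mem_cons, List.not_mem_nil, or_false] at hv
      rcases hv with hv | rfl | rfl
      · exact hvec v hv
      · exact hxW
      · exact hF'.sub_W hyF
  by_cases hA : ctx.IIWinsA X₁ S α (ctx.fspan ∅) (ctx.fspan ∅) []
  · exact ⟨X₁, hX₁, hX₁₀, Or.inl hA⟩
  · exact ⟨X₂, hX₂, hX₂₁.trans hX₁₀, Or.inr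
      (key α le_rfl _ _ (isFinDimIn_empty _) (isFinDimIn_empty _) _ (by simp) hA)⟩

end Frame
end Rosendal

namespace Rosendal
namespace Frame
variable {𝒲 : Type} [NormedAddCommGroup 𝒲] [NormedSpace ℝ 𝒲] {ctx : Frame 𝒲}

theorem IIWinsF_le {X : Set 𝒲} {S : Set (List 𝒲)} {β β' : Ordinal} (h : β' ≤ β)
    {Facc : Set 𝒲} {vec : List 𝒲} (hw : ctx.IIWinsF X S β Facc vec) :
    ctx.IIWinsF X S β' Facc vec := by
  rw [IIWinsF_iff] at *
  exact fun n ξ hξ => hw n ξ (hξ.trans_le h)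

theorem F_multi {X : Set 𝒲} {S : Set (List 𝒲)} (γ : Ordinal) (n M : ℕ) :
    ∀ (Facc : Set 𝒲) (vec : List 𝒲), Facc = ctx.fspan Facc → (∀ v ∈ vec, v ∈ Facc) →
    ctx.IIWinsF X S (γ + M) Facc vec →
    ∃ F, ctx.IsFinDimIn F X ∧ ctx.NatLt n F ∧ ∃ w : List 𝒲, w.length = M ∧
      (∀ v ∈ vec ++ w, v ∈ ctx.fspan (Facc ∪ F)) ∧
      (γ = 0 → 0 < M → vec ++ w ∈ S) ∧
      (γ ≠ 0 → ctx.IIWinsF X S γ (ctx.fspan (Facc ∪ F)) (vec ++ w)) := by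
  induction M with
  | zero =>
    intro Facc vec hF hv h
    refine ⟨ctx.fspan ∅, isFinDimIn_empty _, ?_, [], rfl, ?_, by simp, ?_⟩
    · rw [natLt_iff]
      exact ctx.fspan_sub_U (by simp)
    · intro v hv'
      exact ctx.subset_fspan _ (Or.inl (hv v (by simpa using hv')))
    · intro _
      rw [fspan_union_right]
      simpa [← hF] using h
  | succ M ih =>
    intro Facc vec hF hv h
    have hlt : γ + (M : Ordinal) < γ + ((M + 1 : ℕ) : Ordinal) := by
      gcongr; exact_mod_cast Nat.lt_succ_self M
    rw [IIWinsF_iff] at h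
    obtain ⟨F, h1, h2, x, hx, hxF, h3, h4⟩ := h n _ hlt
    have hvx : ∀ v ∈ vec ++ [x], v ∈ ctx.fspan (Facc ∪ F) := by
      intro v hv'
      simp only [List.mem_append, List.mem_singleton] at hv'
      rcases hv' with hv' | rfl
      · exact ctx.subset_fspan _ (Or.inl (hv v hv'))
      · exact hxF
    by_cases h0 : γ + (M : Ordinal) = 0
    · have hγ : γ = 0 := by
        have := h0
        simp at this
        exact this.1
      have hM : M = 0 := by
        rw [hγ] at h0
        simpa using h0
      subst hM
      exact ⟨F, h1, h2, [x], rfl, hvx, fun _ _ => h3 h0, fun h => absurd hγ h⟩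
    · obtain ⟨F', h1', h2', w, hw, hvw, h5, h6⟩ :=
        ih _ _ (ctx.fspan_fspan _).symm hvx (h4 h0)
      rw [fspan_assoc] at hvw h6
      refine ⟨_, h1.union h1', ?_, x :: w, by simp [hw], by simpa using hvw, ?_, by simpa using h6⟩
      · rw [natLt_iff] at *
        exact ctx.fspan_sub_U (Set.union_subset h2 h2')
      · intro hγ _
        have : 0 < M := by
          rcases Nat.eq_zero_or_pos M with h | h
          · subst h; simp [hγ] at h0
          · exact h
        simpa using h5 hγ this

/-- graph of the copy map -/
def Gr (R : Type) [Semiring R] [Module R 𝒲] (y : ℕ → 𝒲) (v : List 𝒲) : Submodule R (𝒲 × 𝒲) :=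
  Submodule.span R ((fun i => (y i, v.getD i 0)) '' Set.Iio v.length)

theorem Gr_mono (R : Type) [Semiring R] [Module R 𝒲] (y : ℕ → 𝒲) (v w : List 𝒲) :
    Gr R y v ≤ Gr R y (v ++ w) := by
  apply Submodule.span_mono
  rintro _ ⟨i, hi, rfl⟩
  simp only [Set.mem_Iio] at hi
  refine ⟨i, by simp; omega, ?_⟩
  dsimp only
  rw [List.getD_append _ _ _ _ hi]

theorem Gr_F_le (y : ℕ → 𝒲) (v : List 𝒲) {p : 𝒲 × 𝒲} (h : p ∈ Gr ctx.𝔽 y v) : p ∈ Gr ℝ y v := by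
  have : Gr ctx.𝔽 y v ≤ (Gr ℝ y v).restrictScalars ctx.𝔽 :=
    Submodule.span_le.2 Submodule.subset_span
  exact this h

theorem Gr_equiv {K : ℝ} {y : ℕ → 𝒲} {v : List 𝒲} (h : OutcomeEquiv K v y) {p : 𝒲 × 𝒲}
    (hp : p ∈ Gr ℝ y v) : (1 / K) * ‖p.2‖ ≤ ‖p.1‖ ∧ ‖p.1‖ ≤ K * ‖p.2‖ := by
  have hp' : p ∈ Submodule.span ℝ ((fun i => (y i, v.getD i 0)) '' (↑(Finset.range v.length) : Set ℕ)) := by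
    simpa [Gr] using hp
  rw [Submodule.mem_span_image_finset_iff_exists_fun'] at hp'
  obtain ⟨c, rfl⟩ := hp'
  have := h c
  simpa [Prod.fst_sum, Prod.snd_sum] using this

theorem exists_copy {y : ℕ → 𝒲} {x : 𝒲} (hx : x ∈ ctx.fspan (Set.range y)) :
    ∃ M : ℕ, ∀ v : List 𝒲, M ≤ v.length → ∃ u, (x, u) ∈ Gr ctx.𝔽 y v := by
  rw [fspan_eq, ← Set.image_univ, SetLike.mem_coe, Submodule.mem_span_image_iff_exists_fun] at hx
  obtain ⟨t, -, c, rfl⟩ := hx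
  refine ⟨t.sup id + 1, fun v hv => ⟨∑ i, c i • v.getD (i : ℕ) 0, ?_⟩⟩
  have : (∑ i, c i • y i, ∑ i, c i • v.getD (i : ℕ) 0) = ∑ i, c i • (y i, v.getD (i : ℕ) 0) := by
    ext <;> simp [Prod.fst_sum, Prod.snd_sum]
  rw [this]
  refine Submodule.sum_mem _ fun i _ => Submodule.smul_mem _ _ (Submodule.subset_span ⟨i, ?_, rfl⟩)
  have : (i : ℕ) ≤ t.sup id := Finset.le_sup (f := id) i.2
  simp only [Set.mem_Iio]; omega

theorem copy_mem {y : ℕ → 𝒲} {x u : 𝒲} {v : List 𝒲} (h : (x, u) ∈ Gr ctx.𝔽 y v) {T : Set 𝒲}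
    (hv : ∀ w ∈ v, w ∈ ctx.fspan T) : u ∈ ctx.fspan T := by
  rw [fspan_eq] at *
  have : Gr ctx.𝔽 y v ≤ (Submodule.span ctx.𝔽 T).comap (LinearMap.snd ctx.𝔽 𝒲 𝒲) := by
    apply Submodule.span_le.2
    rintro _ ⟨i, hi, rfl⟩
    simp only [Set.mem_Iio] at hi
    simp only [Submodule.comap_coe, LinearMap.snd_apply, Set.mem_preimage]
    rw [List.getD_eq_getElem _ _ hi]
    exact hv _ (List.getElem_mem hi)
  exact this h

theorem outcomeEquiv_pre {K : ℝ} {v w : List 𝒲} {y : ℕ → 𝒲} (h : OutcomeEquiv K (v ++ w) y) :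
    OutcomeEquiv K v y := by
  intro a
  have := h (fun i => if i < v.length then a i else 0)
  have hs : ∀ (f g : ℕ → 𝒲), (∀ i < v.length, f i = g i) →
      ∑ i ∈ Finset.range (v ++ w).length, (if i < v.length then a i else 0) • f i
      = ∑ i ∈ Finset.range v.length, a i • g i := by
    intro f g hfg
    rw [List.length_append, Finset.sum_range_add]
    have h2 : ∑ x ∈ Finset.range w.length, (if v.length + x < v.length then a (v.length + x) else 0) • f (v.length + x) = 0 := by
      apply Finset.sum_eq_zero; intro i _; simp
    rw [h2, add_zero]
    apply Finset.sum_congr rfl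
    intro i hi
    rw [Finset.mem_range] at hi
    simp [hi, hfg i hi]
  rw [hs _ (fun i => v.getD i 0) (fun i hi => List.getD_append _ _ _ _ hi), hs y y (fun _ _ => rfl)] at this
  exact this

theorem IIWinsF_equiv {X : Set 𝒲} {K : ℝ} {y : ℕ → 𝒲} {β : Ordinal} (hβ : β ≠ 0)
    {Facc : Set 𝒲} {vec : List 𝒲} (hw : ctx.IIWinsF X {l | OutcomeEquiv K l y} β Facc vec) :
    OutcomeEquiv K vec y := by
  rw [IIWinsF_iff] at hw
  obtain ⟨F, -, -, x, -, -, h, -⟩ := hw 0 0 (pos_iff_ne_zero.2 hβ)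
  exact outcomeEquiv_pre (w := [x]) (h rfl)

/-- One simulated round. -/
theorem F_round {X : Set 𝒲} {K : ℝ} (hK : 1 ≤ K) {y : ℕ → 𝒲} {β ξ : Ordinal} (hξ : ξ < β) (n : ℕ)
    {Facc : Set 𝒲} {vec : List 𝒲} (hF : Facc = ctx.fspan Facc) (hv : ∀ v ∈ vec, v ∈ Facc)
    (hw : ctx.IIWinsF X {l | OutcomeEquiv K l y} (Ordinal.omega0 * β) Facc vec)
    {x : 𝒲} (hx : x ≠ 0) (hxy : x ∈ ctx.fspan (Set.range y)) :
    ∃ F, ctx.IsFinDimIn F X ∧ ctx.NatLt n F ∧ ∃ w : List 𝒲,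
      (∀ v ∈ vec ++ w, v ∈ ctx.fspan (Facc ∪ F)) ∧ OutcomeEquiv K (vec ++ w) y ∧
      (ξ ≠ 0 → ctx.IIWinsF X {l | OutcomeEquiv K l y} (Ordinal.omega0 * ξ)
        (ctx.fspan (Facc ∪ F)) (vec ++ w)) ∧
      ∃ u, u ≠ 0 ∧ u ∈ ctx.fspan (Facc ∪ F) ∧ (x, u) ∈ Gr ℝ y (vec ++ w) := by
  obtain ⟨M, hM⟩ := exists_copy hxy
  have hle : Ordinal.omega0 * ξ + ((M + 1 : ℕ) : Ordinal) ≤ Ordinal.omega0 * β := by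
    calc Ordinal.omega0 * ξ + ((M + 1 : ℕ) : Ordinal) ≤ Ordinal.omega0 * ξ + Ordinal.omega0 := by
          gcongr; exact (Ordinal.natCast_lt_omega0 _).le
      _ = Ordinal.omega0 * (Order.succ ξ) := (Ordinal.mul_succ _ _).symm
      _ ≤ Ordinal.omega0 * β := by gcongr; exact Order.succ_le_of_lt hξ
  obtain ⟨F, h1, h2, w, hwl, h3, h4, h5⟩ := F_multi _ n (M+1) Facc vec hF hv (IIWinsF_le hle hw)
  have hne : ξ ≠ 0 → Ordinal.omega0 * ξ ≠ 0 := fun h => mul_ne_zero Ordinal.omega0_ne_zero h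
  have hS : OutcomeEquiv K (vec ++ w) y := by
    by_cases h0 : ξ = 0
    · exact h4 (by simp [h0]) (by omega)
    · exact IIWinsF_equiv (hne h0) (h5 (hne h0))
  obtain ⟨u, hu⟩ := hM (vec ++ w) (by simp; omega)
  have huR := Gr_F_le y _ hu
  refine ⟨F, h1, h2, w, h3, hS, fun h => h5 (hne h), u, ?_, copy_mem hu h3, huR⟩
  rintro rfl
  have := (Gr_equiv hS huR).2
  simp at this
  exact hx this

/-- interleaving -/
def inter (ps : List (𝒲 × 𝒲)) : List 𝒲 := ps.flatMap fun p => [p.1, p.2]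

theorem inter_append (ps : List (𝒲 × 𝒲)) (x y : 𝒲) :
    inter (ps ++ [(x, y)]) = inter ps ++ [x, y] := by simp [inter]

theorem inter_length (ps : List (𝒲 × 𝒲)) : (inter ps).length = 2 * ps.length := by
  induction ps with
  | nil => rfl
  | cons p ps ih => simp [inter] at *; omega

theorem inter_getD (ps : List (𝒲 × 𝒲)) : ∀ i, (inter ps).getD (2 * i) 0 = (ps.getD i 0).1 ∧
    (inter ps).getD (2 * i + 1) 0 = (ps.getD i 0).2 := by
  induction ps with
  | nil => intro i; simp [inter]
  | cons p ps ih =>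
    intro i
    cases i with
    | zero => simp [inter]
    | succ i => 
      have := ih i
      rw [show 2 * (i + 1) = 2 * i + 1 + 1 by ring]
      simpa [inter] using this

theorem pair_iff (K : ℝ) (ps : List (𝒲 × 𝒲)) : PairOutcomeEquiv K (inter ps) ↔
    SeqEquiv K ps.length (fun i => (ps.getD i 0).1) (fun i => (ps.getD i 0).2) := by
  unfold PairOutcomeEquiv
  rw [inter_length]
  simp only [inter_getD]
  simp

theorem B_contra {X : Set 𝒲} (hX : ctx.IsBlockSubspace X) {K : ℝ} (hK : 1 ≤ K) {y : ℕ → 𝒲}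
    (hy : ctx.IsBlockSeq y) (hyX : ∀ n, y n ∈ X) (β : Ordinal) :
    ∀ (Eacc Facc : Set 𝒲) (vec : List 𝒲) (ps : List (𝒲 × 𝒲)),
      Eacc ⊆ ctx.fspan (Set.range y) → Facc = ctx.fspan Facc → (∀ v ∈ vec, v ∈ Facc) →
      (∀ p ∈ ps, p ∈ Gr ℝ y vec) →
      ctx.IIWinsF X {l | OutcomeEquiv K l y} (Ordinal.omega0 * β) Facc vec →
      ctx.IWinsB X {l | PairOutcomeEquiv K l}ᶜ β Eacc Facc (inter ps) → False := by
  induction β using WellFoundedLT.induction with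
  | ind β ih =>
    intro Eacc Facc vec ps hE hF hv hps hw hB
    rw [IWinsB_iff] at hB
    have hYX : ctx.IsBlockSubspaceOf (ctx.fspan (Set.range y)) X := ⟨y, hy, hyX, rfl⟩
    obtain ⟨E, hEf, x, hx, hxE, n, ξ, hξ, hB⟩ := hB _ hYX
    have hE' : ctx.fspan (Eacc ∪ E) ⊆ ctx.fspan (Set.range y) :=
      ctx.fspan_le (Set.union_subset hE (hEf.sub hy.bs))
    obtain ⟨F, h1, h2, w, h3, h4, h5, u, hu0, huF, hu⟩ := F_round hK hξ n hF hv hw hx (hE' hxE)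
    have hB := hB F h1 h2 u hu0 huF
    rw [← inter_append] at hB
    have hps' : ∀ p ∈ ps ++ [(x, u)], p ∈ Gr ℝ y (vec ++ w) := by
      intro p hp
      simp only [List.mem_append, List.mem_singleton] at hp
      rcases hp with hp | rfl
      · exact Gr_mono _ _ _ _ (hps p hp)
      · exact hu
    by_cases h0 : ξ = 0
    · apply hB.1 h0
      show PairOutcomeEquiv K _
      rw [pair_iff]
      intro a
      have hmem : ∑ i ∈ Finset.range (ps ++ [(x,u)]).length, a i • (ps ++ [(x,u)]).getD i 0 ∈
          Gr ℝ y (vec ++ w) := by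
        refine Submodule.sum_mem _ fun i hi => Submodule.smul_mem _ _ ?_
        rw [Finset.mem_range] at hi
        rw [List.getD_eq_getElem _ _ hi]
        exact hps' _ (List.getElem_mem hi)
      have := Gr_equiv h4 hmem
      simp only [Prod.fst_sum, Prod.snd_sum, Prod.smul_fst, Prod.smul_snd] at this
      have hK0 : 0 < K := by linarith
      constructor
      · have := this.2
        rw [one_div, inv_mul_le_iff₀ hK0]
        exact this
      · have := this.1
        rw [one_div, inv_mul_le_iff₀ hK0] at this
        exact this
    · exact ih ξ hξ _ _ _ _ hE' (ctx.fspan_fspan _).symm h3 hps' (h5 h0) (hB.2 h0)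

theorem G_win {X X' : Set 𝒲} (hXX : X' ⊆ X) {K : ℝ} (hK : 1 ≤ K)
    {y z : ℕ → 𝒲} (hz0 : ∀ n, z n ≠ 0) (hzy : ∀ n, z n ∈ ctx.fspan (Set.range y)) (β : Ordinal) :
    ∀ (Eacc Facc : Set 𝒲) (vec : List 𝒲) (ps : List (𝒲 × 𝒲)),
      Eacc = ctx.fspan Eacc → (∀ v ∈ vec, v ∈ Eacc) →
      (∀ i < ps.length, (z i, (ps.getD i 0).1) ∈ Gr ℝ y vec) →
      ctx.IIWinsF X {l | OutcomeEquiv K l y} (Ordinal.omega0 * β) Eacc vec →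
      ctx.IIWinsA X {l | PairOutcomeEquiv K l} β Eacc Facc (inter ps) →
      ctx.IIWinsG X' {l | OutcomeEquiv (K * K) l z} β Facc (ps.map Prod.snd) := by
  induction β using WellFoundedLT.induction with
  | ind β ih =>
    intro Eacc Facc vec ps hE hv hps hw hA
    rw [IIWinsG_iff]
    intro Y hY ξ hξ
    rw [IIWinsA_iff] at hA
    obtain ⟨n, hA⟩ := hA
    obtain ⟨E, h1, h2, w, h3, h4, h5, u, hu0, huF, hu⟩ :=
      F_round hK hξ n hE hv hw (hz0 ps.length) (hzy ps.length)
    have hYX : ctx.IsBlockSubspaceOf Y X := by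
      obtain ⟨b, hb, hb', rfl⟩ := hY
      exact ⟨b, hb, fun n => hXX (hb' n), rfl⟩
    obtain ⟨F, hF, g, hg, hgF, h6, h7⟩ := hA E h1 h2 u hu0 huF Y hYX ξ hξ
    rw [← inter_append] at h6 h7
    have hmap : ps.map Prod.snd ++ [g] = (ps ++ [(u, g)]).map Prod.snd := by simp
    have hps' : ∀ i < (ps ++ [(u, g)]).length,
        (z i, ((ps ++ [(u, g)]).getD i 0).1) ∈ Gr ℝ y (vec ++ w) := by
      intro i hi
      by_cases h : i < ps.length
      · rw [List.getD_append _ _ _ _ h]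
        exact Gr_mono _ _ _ _ (hps i h)
      · have : i = ps.length := by simp at hi; omega
        subst this
        simpa using hu
    refine ⟨F, hF, g, hg, hgF, fun h0 => ?_, fun h0 => by
      rw [hmap]
      exact ih ξ hξ _ _ _ _ (ctx.fspan_fspan _).symm h3 hps' (h5 h0) (h7 h0)⟩
    rw [hmap]
    have hP := h6 h0
    generalize ps ++ [(u, g)] = qs at hP hps'
    change PairOutcomeEquiv K _ at hP
    rw [pair_iff] at hP
    show SeqEquiv _ _ _ _
    rw [List.length_map]
    intro a
    have hmem : ∑ i ∈ Finset.range qs.length, a i • (z i, (qs.getD i 0).1) ∈ Gr ℝ y (vec ++ w) :=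
      Submodule.sum_mem _ fun i hi => Submodule.smul_mem _ _ (hps' i (Finset.mem_range.1 hi))
    have e1 := Gr_equiv h4 hmem
    simp only [Prod.fst_sum, Prod.snd_sum, Prod.smul_fst, Prod.smul_snd] at e1
    have e2 := hP a
    have hs : ∀ i, (qs.map Prod.snd).getD i 0 = (qs.getD i 0).2 := by
      intro i
      rw [show (0 : 𝒲) = Prod.snd (0 : 𝒲 × 𝒲) from rfl, List.getD_map]
    simp only [hs]
    have hK0 : 0 < K := by linarith
    rw [one_div, inv_mul_le_iff₀ hK0] at e1 e2
    rw [one_div, inv_mul_le_iff₀ (by positivity)]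
    constructor
    · nlinarith [e1.1, e2.2]
    · nlinarith [e1.2, e2.1]

end Frame
end Rosendal

namespace Rosendal
namespace Frame
variable {𝒲 : Type} [NormedAddCommGroup 𝒲] [NormedSpace ℝ 𝒲] {ctx : Frame 𝒲}

theorem norm_mem_W {x : 𝒲} (hx : x ∈ ctx.W) : ‖x‖ ∈ ctx.𝔽 := by
  unfold W at hx
  rw [fspan_eq, SetLike.mem_coe, Finsupp.mem_span_range_iff_exists_finsupp] at hx
  obtain ⟨c, rfl⟩ := hx
  exact ctx.norm_mem c.support (fun i => (c i : ℝ)) (fun i _ => (c i).2)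

theorem e_block : ctx.IsBlockSeq ctx.e := by
  rw [isBlockSeq_iff]
  refine ⟨fun n => ctx.subset_fspan _ ⟨n, rfl⟩, ctx.e_ne, fun n => {n}, fun n => ?_, ?_⟩
  · exact Submodule.subset_span ⟨n, by simp, rfl⟩
  · intro n i hi j hj
    simp at hi hj
    omega

theorem S_fix {S : 𝒲 →ₗ[ℝ] 𝒲} {N : ℕ} (hS : ∀ i, S (ctx.e i) = if i < N then ctx.e i else 0)
    {s : Set ℕ} {x : 𝒲} (hx : x ∈ ctx.U s) (hs : ∀ i ∈ s, i < N) : S x = x := by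
  have : ctx.U s ≤ LinearMap.eqLocus S LinearMap.id := by
    apply Submodule.span_le.2
    rintro _ ⟨i, hi, rfl⟩
    simp [hS, hs i hi]
  exact this hx

theorem S_zero {S : 𝒲 →ₗ[ℝ] 𝒲} {N : ℕ} (hS : ∀ i, S (ctx.e i) = if i < N then ctx.e i else 0)
    {s : Set ℕ} {x : 𝒲} (hx : x ∈ ctx.U s) (hs : ∀ i ∈ s, N ≤ i) : S x = 0 := by
  have : ctx.U s ≤ LinearMap.ker S := by
    apply Submodule.span_le.2
    rintro _ ⟨i, hi, rfl⟩
    have := hs i hi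
    simp [hS]
    omega
  exact this hx

theorem coef_bound : ∃ C : ℝ, 1 ≤ C ∧ ∀ y : ℕ → 𝒲, ctx.IsBlockSeq y → ∀ (a : ℕ → ℝ) (k i : ℕ),
    i < k → ‖a i • y i‖ ≤ 2 * C * ‖∑ j ∈ Finset.range k, a j • y j‖ := by
  obtain ⟨C, hC, S, hSn, hS⟩ := ctx.exists_proj
  refine ⟨C, hC, fun y hy a k i hik => ?_⟩
  rw [isBlockSeq_iff] at hy
  obtain ⟨-, h0, D, hD, hlt⟩ := hy
  have hne := D_nonempty h0 hD
  have hlt' := @D_lt D hne hlt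
  have key : ∀ j, S ((D i).max' (hne i) + 1) (y j) - S ((D i).min' (hne i)) (y j) =
      if j = i then y i else 0 := by
    intro j
    have hmm := Finset.min'_le_max' (D i) (hne i)
    rcases lt_trichotomy j i with h | h | h
    · have hj : ∀ x ∈ (↑(D j) : Set ℕ), x < (D i).min' (hne i) :=
        fun x hx => hlt' h x hx _ (Finset.min'_mem _ _)
      rw [S_fix (hS _) (hD j) (fun x hx => by have := hj x hx; omega), S_fix (hS _) (hD j) hj]
      simp [h.ne]
    · subst h
      rw [S_fix (hS _) (hD j) (fun x hx => Nat.lt_succ_of_le (Finset.le_max' _ _ hx)),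
        S_zero (hS _) (hD j) (fun x hx => Finset.min'_le _ _ hx)]
      simp
    · have hj : ∀ x ∈ (↑(D j) : Set ℕ), (D i).max' (hne i) < x :=
        fun x hx => hlt' h _ (Finset.max'_mem _ _) x hx
      rw [S_zero (hS _) (hD j) (fun x hx => hj x hx),
        S_zero (hS _) (hD j) (fun x hx => by have := hj x hx; omega)]
      simp [h.ne']
  set v := ∑ j ∈ Finset.range k, a j • y j with hv
  have e : a i • y i = S ((D i).max' (hne i) + 1) v - S ((D i).min' (hne i)) v := by
    rw [hv]
    simp only [map_sum, map_smul]
    rw [← Finset.sum_sub_distrib]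
    simp only [← smul_sub, key]
    simp [hik]
  rw [e]
  calc _ ≤ _ := norm_sub_le _ _
    _ ≤ C * ‖v‖ + C * ‖v‖ := add_le_add (hSn _ _) (hSn _ _)
    _ = _ := by ring

theorem compare {C : ℝ} {y y' : ℕ → 𝒲} (hC : 1 ≤ C)
    (h : ∀ (a : ℕ → ℝ) (k i : ℕ),
      i < k → ‖a i • y i‖ ≤ 2 * C * ‖∑ j ∈ Finset.range k, a j • y j‖) {m : ℕ}
    (h1 : ∀ i < m, ‖y' i‖ = ‖y i‖) (h2 : ∀ i, m ≤ i → y' i = y i) (a : ℕ → ℝ) (k : ℕ) :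
    ‖∑ j ∈ Finset.range k, a j • y' j‖ ≤
      (1 + 4 * C * m) * ‖∑ j ∈ Finset.range k, a j • y j‖ := by
  set v := ∑ j ∈ Finset.range k, a j • y j with hv
  have e : ∑ j ∈ Finset.range k, a j • y' j = v + ∑ j ∈ Finset.range k, a j • (y' j - y j) := by
    rw [hv, ← Finset.sum_add_distrib]
    apply Finset.sum_congr rfl
    intro j _
    rw [smul_sub]; abel
  have hb : ‖∑ j ∈ Finset.range k, a j • (y' j - y j)‖ ≤ m * (4 * C * ‖v‖) := by
    calc _ ≤ ∑ j ∈ Finset.range k, ‖a j • (y' j - y j)‖ := norm_sum_le _ _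
      _ ≤ ∑ j ∈ Finset.range k, (if j < m then 4 * C * ‖v‖ else 0) := by
          apply Finset.sum_le_sum
          intro j hj
          split_ifs with hjm
          · have b := h a k j (Finset.mem_range.1 hj)
            rw [smul_sub]
            have b2 : ‖a j • y' j‖ = ‖a j • y j‖ := by rw [norm_smul, norm_smul, h1 j hjm]
            have := norm_sub_le (a j • y' j) (a j • y j)
            linarith
          · rw [h2 j (by omega)]; simp
      _ = ∑ j ∈ (Finset.range k).filter (· < m), 4 * C * ‖v‖ := by rw [Finset.sum_filter]
      _ ≤ ∑ j ∈ Finset.range m, 4 * C * ‖v‖ := by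
          apply Finset.sum_le_sum_of_subset_of_nonneg
          · intro j; simp
          · intros; positivity
      _ = m * (4 * C * ‖v‖) := by simp
  rw [e]
  have := norm_add_le v (∑ j ∈ Finset.range k, a j • (y' j - y j))
  nlinarith

theorem equiv_transfer {K K' L : ℝ} (hK : 1 ≤ K) (hKK : K ≤ K') (hL : 1 ≤ L) {l : List 𝒲}
    {y y' : ℕ → 𝒲}
    (h1 : ∀ (a : ℕ → ℝ) (k : ℕ), ‖∑ j ∈ Finset.range k, a j • y' j‖ ≤
      L * ‖∑ j ∈ Finset.range k, a j • y j‖)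
    (h2 : ∀ (a : ℕ → ℝ) (k : ℕ), ‖∑ j ∈ Finset.range k, a j • y j‖ ≤
      L * ‖∑ j ∈ Finset.range k, a j • y' j‖)
    (h : OutcomeEquiv K l y) : OutcomeEquiv (K' * L) l y' := by
  intro a
  obtain ⟨e1, e2⟩ := h a
  have f1 := h1 a l.length
  have f2 := h2 a l.length
  have hK' : 0 < K' := by linarith
  rw [one_div, inv_mul_le_iff₀ (by linarith)] at e1
  rw [one_div, inv_mul_le_iff₀ (by positivity)]
  have hA : 0 ≤ ‖∑ i ∈ Finset.range l.length, a i • l.getD i 0‖ := norm_nonneg _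
  have hB : 0 ≤ ‖∑ i ∈ Finset.range l.length, a i • y i‖ := norm_nonneg _
  have hB' : 0 ≤ ‖∑ i ∈ Finset.range l.length, a i • y' i‖ := norm_nonneg _
  constructor
  · calc _ ≤ _ := e1
      _ ≤ K' * ‖∑ i ∈ Finset.range l.length, a i • y i‖ := by gcongr
      _ ≤ K' * (L * ‖∑ i ∈ Finset.range l.length, a i • y' i‖) := by gcongr
      _ = _ := by ring
  · calc _ ≤ _ := f1
      _ ≤ L * (K * ‖∑ i ∈ Finset.range l.length, a i • l.getD i 0‖) := by gcongr
      _ ≤ L * (K' * ‖∑ i ∈ Finset.range l.length, a i • l.getD i 0‖) := by gcongr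
      _ = _ := by ring

/-- Modify a block sequence on an initial segment. -/
theorem modify {Y Y' : Set 𝒲} (hY : ctx.IsBlockSubspace Y) (hYY : Y' ⊆ Y) {r N : ℕ}
    (hr : Y' ⊆ ctx.U (Set.Ioi r)) {b : ℕ → 𝒲} {D : ℕ → Finset ℕ} (hb : ∀ i, b i ∈ Y)
    (hb0 : ∀ i, b i ≠ 0) (hD : ∀ i, b i ∈ ctx.U ↑(D i))
    (hlt : ∀ n, ∀ i ∈ D n, ∀ j ∈ D (n + 1), i < j) (hDr : ∀ i ≤ N, ∀ j ∈ D i, j ≤ r)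
    {y : ℕ → 𝒲} (hy : ctx.IsBlockSeq y) (hyY : ∀ i, N < i → y i ∈ Y') :
    ∃ y' : ℕ → 𝒲, ctx.IsBlockSeq y' ∧ (∀ i, y' i ∈ Y) ∧ (∀ i < N + 1, ‖y' i‖ = ‖y i‖) ∧
      ∀ i, N + 1 ≤ i → y' i = y i := by
  classical
  obtain ⟨g1, g2, E, g3, g4⟩ := (isBlockSeq_iff y).1 hy
  have hmem : ∀ i, (if i ≤ N then (‖y i‖ / ‖b i‖) • b i else y i) ∈ Y := by
    intro i
    split_ifs with h
    · have hc : ‖y i‖ / ‖b i‖ ∈ ctx.𝔽 :=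
        div_mem (norm_mem_W (g1 i)) (norm_mem_W (hY.sub_W (hb i)))
      have : (‖y i‖ / ‖b i‖) • b i ∈ ctx.fspan Y := by
        rw [fspan_eq]
        exact Submodule.smul_mem _ (⟨_, hc⟩ : ctx.𝔽) (Submodule.subset_span (hb i))
      rwa [hY.fspan_self] at this
    · exact hYY (hyY i (by omega))
  refine ⟨fun i => if i ≤ N then (‖y i‖ / ‖b i‖) • b i else y i, ?_, hmem, ?_, ?_⟩
  · rw [isBlockSeq_iff]
    refine ⟨fun i => hY.sub_W (hmem i), fun i => ?_,
      fun i => if i ≤ N then D i else (E i).filter (r < ·), fun i => ?_, fun n i hi j hj => ?_⟩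
    · split_ifs with h
      · have h1 := hb0 i
        have h2 := g2 i
        exact smul_ne_zero (div_ne_zero (norm_ne_zero_iff.2 h2) (norm_ne_zero_iff.2 h1)) h1
      · exact g2 i
    · by_cases h : i ≤ N
      · simp only [h, if_true]
        exact Submodule.smul_mem _ _ (hD i)
      · simp only [h, if_false]
        refine ctx.U_mono ?_ (ctx.U_inter (g3 i) (hr (hyY i (by omega))))
        rintro x ⟨h1, h2⟩
        simp at h1 h2 ⊢
        exact ⟨h1, h2⟩
    · dsimp only at hi hj
      by_cases h : n + 1 ≤ N
      · rw [if_pos (by omega)] at hi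
        rw [if_pos h] at hj
        exact hlt n i hi j hj
      · rw [if_neg h] at hj
        rw [Finset.mem_filter] at hj
        by_cases h' : n ≤ N
        · rw [if_pos h'] at hi
          have := hDr n h' i hi
          omega
        · rw [if_neg h', Finset.mem_filter] at hi
          exact g4 n i hi.1 j hj.1
  · intro i hi
    have h1 : ‖b i‖ ≠ 0 := norm_ne_zero_iff.2 (hb0 i)
    simp only [show i ≤ N by omega, if_true]
    rw [norm_smul, norm_div, norm_norm, norm_norm, div_mul_cancel₀ _ h1]
  · intro i hi
    simp only [show ¬ i ≤ N by omega, if_false]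

theorem uniform {γ : Ordinal} (hγ : γ ≠ 0)
    (H : ∀ X, ctx.IsBlockSubspace X → ∃ y : ℕ → 𝒲, ctx.IsBlockSeq y ∧ (∀ n, y n ∈ X) ∧ ∃ K : ℝ, 1 ≤ K ∧
      ¬ ctx.IWinsF X {l | ¬OutcomeEquiv K l y} γ (ctx.fspan ∅) []) :
    ∃ X₀, ctx.IsBlockSubspace X₀ ∧ ∃ K : ℝ, 1 ≤ K ∧ ∀ X, ctx.IsBlockSubspace X → X ⊆ X₀ →
      ∃ y : ℕ → 𝒲, ctx.IsBlockSeq y ∧ (∀ n, y n ∈ X) ∧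
      ¬ ctx.IWinsF X {l | ¬OutcomeEquiv K l y} γ (ctx.fspan ∅) [] := by
  by_contra hcon
  push Not at hcon
  obtain ⟨C, hC, hcoef⟩ := coef_bound (ctx := ctx)
  have hL : ∀ N : ℕ, (1:ℝ) ≤ 1 + 4 * C * ((N + 1 : ℕ) : ℝ) := by
    intro N
    have : 0 ≤ 4 * C * ((N + 1 : ℕ) : ℝ) := by positivity
    linarith
  obtain ⟨X, hX, -, hdiag⟩ := ctx.diag (fun n N Y' => ∃ Y r, ∃ b : ℕ → 𝒲, ∃ D : ℕ → Finset ℕ,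
      ctx.IsBlockSubspace Y ∧ Y' ⊆ Y ∧ Y' ⊆ ctx.U (Set.Ioi r) ∧ (∀ i, b i ∈ Y) ∧
      (∀ i, b i ≠ 0) ∧ (∀ i, b i ∈ ctx.U ↑(D i)) ∧
      (∀ n, ∀ i ∈ D n, ∀ j ∈ D (n + 1), i < j) ∧ (∀ i ≤ N, ∀ j ∈ D i, j ≤ r) ∧
      ∀ y : ℕ → 𝒲, ctx.IsBlockSeq y → (∀ n, y n ∈ Y) →
        ctx.IWinsF Y {l | ¬OutcomeEquiv (((n + 1 : ℕ) : ℝ) * (1 + 4 * C * ((N + 1 : ℕ) : ℝ))) l y}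
          γ (ctx.fspan ∅) [])
    (by
      intro n N X hX
      have h1 : (1:ℝ) ≤ ((n + 1 : ℕ) : ℝ) := by simp
      obtain ⟨Y, hY, hYX, hwin⟩ := hcon X hX _ (one_le_mul_of_one_le_of_one_le h1 (hL N))
      obtain ⟨b, hb, hbW, rfl⟩ := id hY
      obtain ⟨-, hb0, D, hD, hlt⟩ := (isBlockSeq_iff b).1 hb
      obtain ⟨Y', h3, h4, h5⟩ := hY.tail ((Finset.range (N + 1)).sup fun i => (D i).sup id)
      refine ⟨Y', h3, h4.trans hYX, _, _, b, D, hY, h4, h5,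
        fun i => ctx.subset_fspan _ ⟨i, rfl⟩, hb0, hD, hlt, ?_, hwin⟩
      intro i hi j hj
      calc j ≤ (D i).sup id := Finset.le_sup (f := id) hj
        _ ≤ _ := Finset.le_sup (f := fun i => (D i).sup id) (Finset.mem_range.2 (by omega)))
    _ (e_block (ctx := ctx)).bs
  obtain ⟨y, hy, hyX, K, hK, hno⟩ := H X hX
  obtain ⟨n, hn⟩ := exists_nat_ge K
  obtain ⟨N, Y', hY', ⟨Y, r, b, D, hY, hYY, hr, hb, hb0, hD, hlt, hDr, hwin⟩, hsub⟩ := hdiag n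
  obtain ⟨y', hy', hy'Y, e1, e2⟩ := modify hY hYY hr hb hb0 hD hlt hDr hy
    (fun i hi => hsub ⟨hyX i, hy.mem_U hi⟩)
  apply hno
  refine IWinsF_mono hX (N := N) (hsub.trans hYY) ?_ _ _ _ (hwin y' hy' hy'Y)
  intro l hl hl'
  apply hl
  refine equiv_transfer hK (by push_cast; linarith) (hL N) ?_ ?_ hl'
  · exact compare hC (hcoef y hy) e1 e2
  · exact compare hC (hcoef y' hy') (fun i hi => (e1 i hi).symm) (fun i hi => (e2 i hi).symm)

theorem main_aux (α : Ordinal) (hα : α < (Cardinal.aleph 1).ord) :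
    ∃ X : Set 𝒲, ctx.IsBlockSubspace X ∧
      ((∀ y : ℕ → 𝒲, ctx.IsBlockSeq y → (∀ n, y n ∈ X) → ∀ K : ℝ, 1 ≤ K →
          ctx.IStratF X (Ordinal.omega0 * α) {l | ¬OutcomeEquiv K l y}) ∨
       (∃ K : ℝ, 1 ≤ K ∧ ∀ z : ℕ → 𝒲, ctx.IsBlockSeq z → (∀ n, z n ∈ X) →
          ctx.IIStratG X α {l | OutcomeEquiv K l z})) := by
  by_cases h0 : α = 0
  · refine ⟨_, (e_block (ctx := ctx)).bs, Or.inr ⟨1, le_rfl, fun z _ _ => ⟨fun _ => ?_, fun h => absurd h0 h⟩⟩⟩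
    intro a
    simp
  have hγ : Ordinal.omega0 * α ≠ 0 := mul_ne_zero Ordinal.omega0_ne_zero h0
  by_cases hcase : ∃ X : Set 𝒲, ctx.IsBlockSubspace X ∧
      (∀ y : ℕ → 𝒲, ctx.IsBlockSeq y → (∀ n, y n ∈ X) → ∀ K : ℝ, 1 ≤ K →
          ctx.IWinsF X {l | ¬OutcomeEquiv K l y} (Ordinal.omega0 * α) (ctx.fspan ∅) [])
  · obtain ⟨X, hX, h⟩ := hcase
    exact ⟨X, hX, Or.inl fun y hy hyX K hK => ⟨fun h => absurd h hγ, fun _ => h y hy hyX K hK⟩⟩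
  push Not at hcase
  obtain ⟨X₀, hX₀, K, hK, hunif⟩ := uniform hγ hcase
  obtain ⟨X, hX, hXX, hram⟩ := ramsey hα {l : List 𝒲 | PairOutcomeEquiv K l} X₀ hX₀
  obtain ⟨y, hy, hyX, hno⟩ := hunif X hX hXX
  have hII : ctx.IIWinsF X {l | OutcomeEquiv K l y} (Ordinal.omega0 * α) (ctx.fspan ∅) [] :=
    F_det _ _ _ _ _ hno
  rcases hram with hA | hB
  · refine ⟨_, hy.bs, Or.inr ⟨K * K, one_le_mul_of_one_le_of_one_le hK hK, fun z hz hzy =>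
      ⟨fun h => absurd h h0, fun _ => ?_⟩⟩⟩
    exact G_win (hX.fspan_sub (by rintro _ ⟨n, rfl⟩; exact hyX n)) hK hz.2.1 hzy α _ _ [] []
      (ctx.fspan_fspan _).symm (by simp) (by simp) hII hA
  · exact (B_contra hX hK hy hyX α _ _ [] [] (ctx.fspan_mono (by simp)) (ctx.fspan_fspan _).symm
      (by simp) (by simp) hII hB).elim

end Frame
end Rosendal

namespace Rosendal

/-- game-theoretic dichotomy.  For every countable ordinal `α` there
is a block subspace `X ⊆ W` such that either (1) for every block sequence `(y n)` in `X`
and `K ≥ 1`, I has a strategy in `F^{ωα}_X` to play outcomes not `K`-equivalent to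
`(y n)`, or (2) there is `K ≥ 1` such that for every block sequence `(z n)` in `X`, II
has a strategy in `G^α_X` to play outcomes `K`-equivalent to `(z n)`. -/
theorem game_dichotomy
    (𝒲 : Type) [NormedAddCommGroup 𝒲] [NormedSpace ℝ 𝒲] (ctx : Frame 𝒲)
    (α : Ordinal) (hα : α < (Cardinal.aleph 1).ord) :
    ∃ X : Set 𝒲, ctx.IsBlockSubspace X ∧
      ((∀ y : ℕ → 𝒲, ctx.IsBlockSeq y → (∀ n, y n ∈ X) → ∀ K : ℝ, 1 ≤ K →
          ctx.IStratF X (Ordinal.omega0 * α) {l | ¬OutcomeEquiv K l y}) ∨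
       (∃ K : ℝ, 1 ≤ K ∧ ∀ z : ℕ → 𝒲, ctx.IsBlockSeq z → (∀ n, z n ∈ X) →
          ctx.IIStratG X α {l | OutcomeEquiv K l z})) := by
  exact Frame.main_aux α hα

end Rosendal
end

section
/- Suppose α < ω₁, K ≥ 1, X ⊆ W is a block subspace and (z_n) ⊆ W is a block sequence such that player II has a strategy in G^α_X to play outcomes (y_0,…,y_k) satisfying (y_0,…,y_k) ∼_K (z_0,…,z_k). Then for every block subspace Y ⊆ X, rank(T((z_n),Y,K)) > α. -/
open Filter Topology

namespace Rosendal

theorem fspan_eq {𝒲 : Type} [NormedAddCommGroup 𝒲] [NormedSpace ℝ 𝒲] (ctx : Frame 𝒲)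
    (S : Set 𝒲) : ctx.fspan S = (Submodule.span ctx.𝔽 S : Set 𝒲) := by
  ext v
  constructor
  · rintro ⟨t, ht, c, hc, rfl⟩
    refine Submodule.sum_mem _ fun w hw => ?_
    exact Submodule.smul_mem _ (⟨c w, hc w⟩ : ctx.𝔽) (Submodule.subset_span (ht hw))
  · intro hv
    obtain ⟨f, t, ht, -, rfl⟩ := Submodule.mem_span_iff_exists_finset_subset.1 hv
    exact ⟨t, ht, fun w => (f w : ℝ), fun w => (f w).2, rfl⟩

theorem seqEquiv_prefix {𝒲 : Type} [NormedAddCommGroup 𝒲] [NormedSpace ℝ 𝒲] (K : ℝ)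
    (l : List 𝒲) (x : 𝒲) (z : ℕ → 𝒲)
    (h : SeqEquiv K (l ++ [x]).length (fun i => (l ++ [x]).getD i 0) z) :
    SeqEquiv K l.length (fun i => l.getD i 0) z := by
  intro a
  have := h (fun i => if i < l.length then a i else 0)
  simp only [List.length_append, List.length_singleton, Finset.sum_range_succ, lt_irrefl,
    if_false, zero_smul, add_zero] at this
  have e1 : ∑ i ∈ Finset.range l.length, (if i < l.length then a i else 0) • (l ++ [x]).getD i 0
      = ∑ i ∈ Finset.range l.length, a i • l.getD i 0 := by
    refine Finset.sum_congr rfl fun i hi => ?_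
    have hi := Finset.mem_range.1 hi
    rw [if_pos hi, List.getD_append _ _ _ _ hi]
  have e2 : ∑ i ∈ Finset.range l.length, (if i < l.length then a i else 0) • z i
      = ∑ i ∈ Finset.range l.length, a i • z i := by
    refine Finset.sum_congr rfl fun i hi => ?_
    rw [if_pos (Finset.mem_range.1 hi)]
  rw [e1, e2] at this
  exact this

theorem IIWinsG_iff {𝒲 : Type} [NormedAddCommGroup 𝒲] [NormedSpace ℝ 𝒲] (ctx : Frame 𝒲)
    (X : Set 𝒲) (S : Set (List 𝒲)) (α : Ordinal) (Facc : Set 𝒲) (vec : List 𝒲) :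
    ctx.IIWinsG X S α Facc vec ↔
      ∀ Y : Set 𝒲, ctx.IsBlockSubspaceOf Y X →
      ∀ ξ : Ordinal, ξ < α →
        ∃ F : Set 𝒲, ctx.IsFinDimIn F Y ∧
          ∃ x : 𝒲, x ≠ 0 ∧ x ∈ ctx.fspan (Facc ∪ F) ∧
            (ξ = 0 → vec ++ [x] ∈ S) ∧
            (ξ ≠ 0 → ctx.IIWinsG X S ξ (ctx.fspan (Facc ∪ F)) (vec ++ [x])) := by
  unfold Frame.IIWinsG
  rw [WellFounded.fix_eq]

theorem rank_aux {𝒲 : Type} [NormedAddCommGroup 𝒲] [NormedSpace ℝ 𝒲] (ctx : Frame 𝒲)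
    (K : ℝ) (X : Set 𝒲) (z : ℕ → 𝒲) (Y : Set 𝒲) (hY : ctx.IsBlockSubspaceOf Y X)
    (h : WellFounded (fun t s : embTree z Y K => s.val <+: t.val ∧ s.val ≠ t.val))
    (β : Ordinal) : β ≠ 0 → ∀ (Facc : Set 𝒲) (vec : List 𝒲), Facc ⊆ Y → (∀ v ∈ vec, v ∈ Y) →
      ctx.IIWinsG X {l | OutcomeEquiv K l z} β Facc vec →
      ∃ hv : vec ∈ embTree z Y K, β ≤ (h.apply ⟨vec, hv⟩).rank := by
  induction β using WellFoundedLT.induction with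
  | ind β ih =>
  intro hβ Facc vec hF hvec hw
  rw [IIWinsG_iff] at hw
  have key : ∀ ξ < β, ∃ x, ∃ hv : vec ++ [x] ∈ embTree z Y K,
      ξ ≤ (h.apply ⟨vec ++ [x], hv⟩).rank := by
    intro ξ hξ
    obtain ⟨F, ⟨t, ht, rfl⟩, x, -, hx, h0, h1⟩ := hw Y hY ξ hξ
    have hsub : ctx.fspan (Facc ∪ ctx.fspan ↑t) ⊆ Y := by
      obtain ⟨y, -, -, rfl⟩ := hY
      simp only [fspan_eq] at hF ht ⊢
      refine Submodule.span_le.2 (Set.union_subset hF (Submodule.span_le.2 ht))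
    have hv' : ∀ v ∈ vec ++ [x], v ∈ Y := by
      intro v hv
      rcases List.mem_append.1 hv with hv | hv
      · exact hvec v hv
      · rw [List.mem_singleton.1 hv]; exact hsub hx
    refine ⟨x, ?_⟩
    by_cases hz : ξ = 0
    · exact ⟨⟨hv', h0 hz⟩, by simp [hz]⟩
    · exact ih ξ hξ hz _ _ hsub hv' (h1 hz)
  have hv : vec ∈ embTree z Y K := by
    obtain ⟨x, hx, -⟩ := key 0 (pos_iff_ne_zero.2 hβ)
    exact ⟨hvec, seqEquiv_prefix K vec x z hx.2⟩
  refine ⟨hv, le_of_forall_lt fun ξ hξ => ?_⟩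
  obtain ⟨x, hx, hr⟩ := key ξ hξ
  refine hr.trans_lt (Acc.rank_lt_of_rel (h.apply ⟨vec, hv⟩) ?_)
  exact ⟨List.prefix_append _ _, by simp⟩

/-- If II has a strategy in `G^α_X` to play outcomes `K`-equivalent to
the block sequence `(z n)`, then for every block subspace `Y ⊆ X`,
`rank T((z n), Y, K) > α`. -/
theorem rank_from_gowers_strategy
    (𝒲 : Type) [NormedAddCommGroup 𝒲] [NormedSpace ℝ 𝒲] (ctx : Frame 𝒲)
    (α : Ordinal) (hα : α < (Cardinal.aleph 1).ord) (K : ℝ) (hK : 1 ≤ K)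
    (X : Set 𝒲) (hX : ctx.IsBlockSubspace X)
    (z : ℕ → 𝒲) (hz : ctx.IsBlockSeq z)
    (h : ctx.IIStratG X α {l | OutcomeEquiv K l z}) :
    ∀ Y : Set 𝒲, ctx.IsBlockSubspaceOf Y X →
      (α : WithTop Ordinal) < treeRank (embTree z Y K) := by
  intro Y hY
  unfold treeRank
  split_ifs with hwf
  · rw [WithTop.coe_lt_coe]
    have : ∃ hv : ([] : List 𝒲) ∈ embTree z Y K, α ≤ (hwf.apply ⟨[], hv⟩).rank := by
      by_cases h0 : α = 0
      · refine ⟨⟨by simp, h.1 h0⟩, by simp [h0]⟩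
      · refine rank_aux ctx K X z Y hY hwf α h0 _ _ ?_ (by simp) (h.2 h0)
        obtain ⟨y, -, -, rfl⟩ := hY
        simp only [fspan_eq]
        exact Submodule.span_mono (Set.empty_subset _)
    obtain ⟨hv, hr⟩ := this
    refine (Order.lt_succ_of_le hr).trans_le ?_
    exact Ordinal.le_iSup (fun s : embTree z Y K => Order.succ ((hwf.apply s).rank)) ⟨[], hv⟩
  · exact WithTop.coe_lt_top _

end Rosendal
end
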